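/- Let G be a finitely generated virtually solvable group that is not virtually nilpotent. Then no Cayley graph of G (with respect to a finite symmetric generating set) coarsely embeds into any δ-hyperbolic connected graph of uniformly bounded degree. In particular, G does not coarsely embed into any hyperbolic group. -/

import Mathlib

open SimpleGraph

/-- A graph has uniformly bounded degree if there is a uniform finite bound on
the cardinality of all neighbour sets. -/
def BddDegree {V : Type*} (G : SimpleGraph V) : Prop :=
  ∃ D : ℕ, ∀ v : V, (G.neighborSet v).encard ≤ D

/-- A walk is geodesic if its length realizes the graph distance between its endpoints. -/
def SimpleGraph.Walk.IsGeodesic {V : Type*} {G : SimpleGraph V} {x y : V}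
    (w : G.Walk x y) : Prop :=
  w.length = G.dist x y

/-- A graph is `δ`-hyperbolic if each side of every geodesic triangle is contained in the
closed `δ`-neighbourhood of the union of the other two sides. -/
def GraphHyperbolic {V : Type*} (G : SimpleGraph V) (δ : ℝ) : Prop :=
  ∀ ⦃a b c : V⦄ (γ₁ : G.Walk a b) (γ₂ : G.Walk b c) (γ₃ : G.Walk c a),
    γ₁.IsGeodesic → γ₂.IsGeodesic → γ₃.IsGeodesic →
      ∀ u ∈ γ₁.support, ∃ v, (v ∈ γ₂.support ∨ v ∈ γ₃.support) ∧ (G.dist u v : ℝ) ≤ δ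

/-- `x` admits an `(L,s,C)`-bigon with respect to the basepoint `x₀`: two paths from `x₀`
to `x`, each of length at most `L·d(x₀,x)`, such that any vertex of the first path outside
the `C`-neighbourhood of `{x₀, x}` is at distance more than `s` from any vertex of the
second path outside that neighbourhood. -/
def IsBigonAt {V : Type*} (G : SimpleGraph V) (x₀ : V) (L s C : ℝ) (x : V) : Prop :=
  ∃ α₁ α₂ : G.Walk x₀ x,
    ((α₁.length : ℝ) ≤ L * G.dist x₀ x) ∧ ((α₂.length : ℝ) ≤ L * G.dist x₀ x) ∧
    ∀ u ∈ α₁.support, ∀ v ∈ α₂.support,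
      (C < (G.dist x₀ u : ℝ) ∧ C < (G.dist x u : ℝ)) →
      (C < (G.dist x₀ v : ℝ) ∧ C < (G.dist x v : ℝ)) →
      s < (G.dist u v : ℝ)

/-- The set `B^X(L,s,C)` of vertices admitting an `(L,s,C)`-bigon. -/
def bigonSet {V : Type*} (G : SimpleGraph V) (x₀ : V) (L s C : ℝ) : Set V :=
  {x | IsBigonAt G x₀ L s C x}

/-- The closed ball of radius `n` about `x` in the graph metric. -/
def gBall {V : Type*} (G : SimpleGraph V) (x : V) (n : ℕ) : Set V :=
  {v | G.dist x v ≤ n}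

/-- `X` has exponentially many fat bigons at `x₀`. -/
def HasExpManyFatBigons {V : Type*} (G : SimpleGraph V) (x₀ : V) : Prop :=
  ∃ s₀ c L : ℝ, 0 ≤ s₀ ∧ 1 < c ∧ 1 < L ∧
    ∀ s : ℝ, s₀ ≤ s → ∃ C : ℝ, 0 ≤ C ∧
      {n : ℕ | (c ^ n : ℝ) ≤ ((bigonSet G x₀ L s C ∩ gBall G x₀ n).ncard : ℝ)}.Infinite

/-- `X` has no fat bigons at `x₀`. -/
def HasNoFatBigons {V : Type*} (G : SimpleGraph V) (x₀ : V) : Prop :=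
  ∀ L : ℝ, 1 ≤ L → ∃ s : ℝ, 0 ≤ s ∧ ∀ C : ℝ, 0 ≤ C →
    ∃ R : ℕ, ∀ x ∈ bigonSet G x₀ L s C, G.dist x₀ x ≤ R

/-- A coarse embedding of the graph `G` into the graph `H`, with multiplicative constant `K`
and compression function `ρ`. -/
def IsCoarseEmbedding {V W : Type*} (G : SimpleGraph V) (H : SimpleGraph W)
    (f : V → W) (K : ℝ) (ρ : ℕ → ℕ) : Prop :=
  1 ≤ K ∧ Filter.Tendsto ρ Filter.atTop Filter.atTop ∧
    ∀ x y : V, (ρ (G.dist x y) : ℝ) ≤ (H.dist (f x) (f y) : ℝ) ∧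
      (H.dist (f x) (f y) : ℝ) ≤ K * (G.dist x y : ℝ)

/-- The Cayley graph of a group with respect to a (symmetric) set `S`. -/
def cayleyGraph (G : Type*) [Group G] (S : Set G) : SimpleGraph G :=
  SimpleGraph.fromRel (fun x y => x⁻¹ * y ∈ S)

/-- The Cayley graph of `G` w.r.t. the basepoint `1` has exponential growth:
`|B_n(1)|^(1/n)` converges to a limit `> 1`. -/
def HasExpGrowth {V : Type*} (G : SimpleGraph V) (x₀ : V) : Prop :=
  ∃ a : ℝ, 1 < a ∧
    Filter.Tendsto (fun n : ℕ => ((gBall G x₀ n).ncard : ℝ) ^ ((n : ℝ)⁻¹))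
      Filter.atTop (nhds a)

/-- `Div_X(n) ≤ M`: for all vertices `a b` with `d(a,b) ≤ n` and every `c ∉ {a, b}`, there is
a path from `a` to `b` of length at most `M` avoiding the ball around `c` of radius
`(1/2)·d(c,{a,b}) − 2`. -/
def DivLE {V : Type*} (G : SimpleGraph V) (n : ℕ) (M : ℝ) : Prop :=
  ∀ a b c : V, G.dist a b ≤ n → c ≠ a → c ≠ b →
    ∃ w : G.Walk a b, (w.length : ℝ) ≤ M ∧
      ∀ u ∈ w.support, ((min (G.dist c a) (G.dist c b) : ℝ)) / 2 - 2 < (G.dist c u : ℝ)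

/-- A group (given as a graph) is one-ended. -/
def OneEnded {V : Type*} (G : SimpleGraph V) : Prop :=
  ∃! e, e ∈ G.end

/-- A group is virtually solvable if it has a solvable subgroup of finite index. -/
def VirtuallySolvable (G : Type*) [Group G] : Prop :=
  ∃ H : Subgroup G, H.FiniteIndex ∧ IsSolvable H

/-- A group is virtually nilpotent if it has a nilpotent subgroup of finite index. -/
def VirtuallyNilpotent (G : Type*) [Group G] : Prop :=
  ∃ H : Subgroup G, H.FiniteIndex ∧ Group.IsNilpotent H

/-!
A coarse embedding of a Cayley graph of `G` into a hyperbolic graph of bounded degree forces `G` to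
have polynomial growth as soon as `G` is amenable, and a finitely generated virtually solvable group
of polynomial growth is virtually nilpotent by the theorem of Milnor and Wolf.

*From hyperbolicity to cheap cuts.* Let `Γ` be a set of `n` points of `G`, viewed in the hyperbolic
graph, and let `o` be a median of `Γ`. Seen from `o` no direction carries most of the points
(`median_spread`), while by bounded degree some small cone carries a definite proportion of them
(`exists_cluster`). The visual metric based at `o` (`exists_visual`) therefore varies by a definite
amount on a definite proportion of `Γ`, whereas an edge of `Γ` at distance `r` from `o` has visual
length exponentially small in `r`. Balls grow at most exponentially and the fibres of the embedding
are bounded, so the total visual length of the edges is at most `C n ^ (1 - η)`, and the coarea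
inequality gives a level that cuts `Γ` into two comparable pieces along `C n ^ (1 - η)` edges
(`exists_cut`).

*From cheap cuts to polynomial growth.* A virtually solvable group has Følner sets. Cutting a large
Følner set repeatedly and keeping the better piece each time yields, for every `n`, a set of about
`n` points whose boundary ratio is at most a constant times `n ^ (-η)` plus the arbitrarily small
ratio of the Følner set (`exists_descent`). The inequality of Coulhon and Saloff-Coste
(`card_le_mul_bdry`) says that a set of half the size of the ball of radius `r` has boundary ratio
at least `1 / (2 r)`; hence the ball of radius `r` has `O(r ^ (1 / η))` elements
(`exists_card_pow_le`).

*Milnor and Wolf.* In a group of polynomial growth the `2 ^ m` words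
`u₀ ^ ε₀ * t * u₁ ^ ε₁ * t * ⋯` cannot be distinct for every `m` (`exists_collision`). Coincidences
show that normal subgroups with cyclic quotient are finitely generated (`milnor_fg`). Applied to a
constant sequence `u` in an abelian layer, they give monic relations with coefficients in
`{-1, 0, 1}` for all powers of the conjugation by `t`; by Kronecker's theorem its eigenvalues are
roots of unity, so a power of `t` acts unipotently (`exists_unipotent_power`). An induction along
the derived series concludes (`virtuallyNilpotent_of_polyGrowth`).
-/

/-! ### Unipotent powers of endomorphisms -/

open Polynomial in
/-- Cauchy's bound for a polynomial with coefficients in `{-1, 0, 1}`. -/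
lemma norm_root_le_two (p : ℤ[X]) (hp : p.Monic) (hc : ∀ i, |p.coeff i| ≤ 1) (z : ℂ)
    (hz : aeval z p = 0) : ‖z‖ ≤ 2 := by
  have hm : (p.map (algebraMap ℤ ℂ)).Monic := hp.map _
  have hroot : (p.map (algebraMap ℤ ℂ)).IsRoot z := by
    rw [IsRoot, eval_map_algebraMap, hz]
  have h1 := hroot.norm_lt_cauchyBound hm.ne_zero
  have h2 : (p.map (algebraMap ℤ ℂ)).cauchyBound ≤ 2 := by
    unfold cauchyBound
    rw [hm.leadingCoeff]
    have : (Finset.range (p.map (algebraMap ℤ ℂ)).natDegree).sup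
        (fun i => ‖(p.map (algebraMap ℤ ℂ)).coeff i‖₊) ≤ 1 := by
      refine Finset.sup_le fun i _ => ?_
      rw [coeff_map, ← NNReal.coe_le_coe]
      simp only [eq_intCast, coe_nnnorm, NNReal.coe_one, Complex.norm_intCast]
      exact_mod_cast hc i
    calc _ ≤ (1:NNReal) + 1 := by simpa using this
      _ = 2 := by norm_num
  calc ‖z‖ ≤ ((p.map (algebraMap ℤ ℂ)).cauchyBound : ℝ) := by exact_mod_cast h1.le
    _ ≤ 2 := by exact_mod_cast h2

open Polynomial IntermediateField in
/-- A form of Kronecker's theorem: a conjugate of `y` of absolute value greater than `1` would have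
a power of absolute value greater than `2`, contradicting `norm_root_le_two`. Hence all conjugates
of the algebraic integer `y` lie in the unit disc. -/
lemma field_root_of_unity {F : Type*} [Field F] [CharZero F] (y : F) (hy0 : y ≠ 0)
    (hint : ∃ p : ℤ[X], p.Monic ∧ eval₂ (Int.castRingHom F) y p = 0)
    (h : ∀ j : ℕ, 0 < j → ∃ p : ℤ[X], p.Monic ∧ (∀ i, |p.coeff i| ≤ 1) ∧
      eval₂ (Int.castRingHom F) (y ^ j) p = 0) :
    ∃ m : ℕ, 0 < m ∧ y ^ m = 1 := by
  have hy : IsIntegral ℤ y := hint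
  let K := ℚ⟮y⟯
  let : NumberField K := {
    to_charZero := ℚ⟮y⟯.charZero
    to_finiteDimensional := adjoin.finiteDimensional hy.tower_top }
  let w : K := ⟨y, mem_adjoin_simple_self ℚ y⟩
  obtain ⟨n, hn, hwn⟩ := NumberField.Embeddings.pow_eq_one_of_norm_le_one (x := w) K ℂ
    (fun h0 => hy0 (congrArg Subtype.val h0)) (coe_isIntegral_iff.mp hy) (by
      intro φ
      by_contra! hlt
      obtain ⟨j, hj⟩ := pow_unbounded_of_one_lt 2 hlt
      have hj0 : 0 < j := by
        rcases Nat.eq_zero_or_pos j with rfl | h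
        · norm_num at hj
        · exact h
      obtain ⟨p, hp1, hp2, hp3⟩ := h j hj0
      have h4 : eval₂ (Int.castRingHom K) (w ^ j) p = 0 := by
        apply (algebraMap K F).injective
        rw [hom_eval₂, map_zero, map_pow]
        rw [← hp3]
        congr 1
      have h5 : aeval ((φ w) ^ j) p = 0 := by
        have := congrArg φ h4
        rw [map_zero, hom_eval₂, map_pow] at this
        rw [← this, aeval_def]
        congr 1
        exact Subsingleton.elim _ _
      have := norm_root_le_two p hp1 hp2 _ h5
      rw [norm_pow] at this
      linarith)
  refine ⟨n, hn, ?_⟩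
  exact congrArg Subtype.val hwn

open Polynomial in
/-- The same conclusion in a domain that is a finite `ℤ`-module. Such a domain is finite unless its
characteristic is zero. -/
lemma domain_root_of_unity {B : Type*} [CommRing B] [IsDomain B] (hfin : Module.Finite ℤ B) (x : B)
    (hx : x ≠ 0)
    (h : ∀ j : ℕ, 0 < j → ∃ p : ℤ[X], p.Monic ∧ (∀ i, |p.coeff i| ≤ 1) ∧
      eval₂ (Int.castRingHom B) (x ^ j) p = 0) :
    ∃ m : ℕ, 0 < m ∧ x ^ m = 1 := by
  rcases CharP.exists B with ⟨q, hq⟩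
  rcases Nat.eq_zero_or_pos q with rfl | hq0
  · have : CharZero B := CharP.charP_to_charZero B
    have hinj : Function.Injective (algebraMap B (FractionRing B)) := IsFractionRing.injective B _
    have hF : CharZero (FractionRing B) := charZero_of_injective_algebraMap hinj
    have hint : ∃ p : ℤ[X], p.Monic ∧
        eval₂ (Int.castRingHom _) (algebraMap B (FractionRing B) x) p = 0 := by
      obtain ⟨p, hp, hp'⟩ := Algebra.IsIntegral.isIntegral (R := ℤ) x
      refine ⟨p, hp, ?_⟩
      have := congrArg (algebraMap B (FractionRing B)) hp'
      rw [hom_eval₂, map_zero] at this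
      rw [← this]
      congr 1
      exact Subsingleton.elim _ _
    obtain ⟨n, hn, hwn⟩ := field_root_of_unity (algebraMap B (FractionRing B) x)
      (by rwa [Ne, map_eq_zero_iff _ hinj]) hint (by
        intro j hj
        obtain ⟨p, hp1, hp2, hp3⟩ := h j hj
        refine ⟨p, hp1, hp2, ?_⟩
        have := congrArg (algebraMap B (FractionRing B)) hp3
        rw [hom_eval₂, map_zero, map_pow] at this
        rw [← this]
        congr 1
        exact Subsingleton.elim _ _)
    refine ⟨n, hn, hinj ?_⟩
    rw [map_pow, map_one]; exact hwn
  · have : Finite B := by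
      have : NeZero q := ⟨hq0.ne'⟩
      let : Algebra (ZMod q) B := ZMod.algebra B q
      have : Module.Finite (ZMod q) B := Module.Finite.of_restrictScalars_finite ℤ (ZMod q) B
      exact Module.finite_of_finite (ZMod q)
    obtain ⟨a, b, hab, h⟩ := Finite.exists_ne_map_eq_of_infinite (fun n : ℕ => x ^ n)
    have main : ∀ a b : ℕ, a < b → x ^ a = x ^ b → ∃ m : ℕ, 0 < m ∧ x ^ m = 1 := by
      intro a b hlt h
      refine ⟨b - a, by omega, ?_⟩
      have h' : x ^ a * x ^ (b - a) = x ^ a * 1 := by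
        rw [← pow_add, mul_one, Nat.add_sub_cancel' hlt.le]; exact h.symm
      exact mul_left_cancel₀ (pow_ne_zero _ hx) h'
    rcases hab.lt_or_gt with hlt | hlt
    · exact main a b hlt h
    · exact main b a hlt h.symm

open Polynomial Classical in
/-- If every vector is annihilated, for each `j > 0`, by a monic polynomial in `T ^ j` with
coefficients in `{-1, 0, 1}`, then some power of `T` is unipotent away from the nilpotent part
of `T`: modulo each minimal prime over the annihilator of `T` in `ℤ[X]`, the variable `X` becomes
zero or a root of unity. -/
lemma exists_pow_unipotent {A : Type*} [AddCommGroup A] [Module.Finite ℤ A] (T : Module.End ℤ A)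
    (h : ∀ j : ℕ, 0 < j → ∀ a : A, ∃ p : ℤ[X], p.Monic ∧ (∀ i, |p.coeff i| ≤ 1) ∧
      aeval (T ^ j) p a = 0) :
    ∃ m k : ℕ, 0 < m ∧ T ^ k * (T ^ m - 1) ^ k = 0 := by
  let I : Ideal ℤ[X] := RingHom.ker (aeval T : ℤ[X] →ₐ[ℤ] Module.End ℤ A)
  obtain ⟨χ, hχm, hχ⟩ := Algebra.IsIntegral.isIntegral (R := ℤ) T
  have hχI : χ ∈ I := by
    change aeval T χ = 0
    exact hχ
  obtain ⟨s, hs⟩ := Module.finite_def.1 (inferInstance : Module.Finite ℤ A)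
  -- each minimal prime contains `X * (X ^ m - 1)` for some `m > 0`
  have key : ∀ P ∈ I.minimalPrimes, ∃ m : ℕ, 0 < m ∧ (X : ℤ[X]) * (X ^ m - 1) ∈ P := by
    intro P hP
    have hPp : P.IsPrime := hP.1.1
    have hIP : I ≤ P := hP.1.2
    by_cases hXP : (X : ℤ[X]) ∈ P
    · exact ⟨1, one_pos, P.mul_mem_right _ hXP⟩
    have hfin : @Module.Finite ℤ (ℤ[X] ⧸ P) _ _ (AddCommGroup.toIntModule _) := by
      have h1 : Module.Finite ℤ (ℤ[X] ⧸ Ideal.span {χ}) := hχm.finite_quotient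
      have hle : Ideal.span {χ} ≤ P := by
        rw [Ideal.span_singleton_le_iff_mem]; exact hIP hχI
      have h2 : Module.Finite ℤ (ℤ[X] ⧸ P) := Module.Finite.of_surjective
        (Ideal.Quotient.factorₐ ℤ hle).toLinearMap (Ideal.Quotient.factor_surjective hle)
      convert h2
    have hval : ∀ q : ℤ[X], ∀ j, eval₂ (Int.castRingHom _) ((Ideal.Quotient.mk P X) ^ j) q
        = Ideal.Quotient.mk P (q.comp (X ^ j)) := by
      intro q j
      rw [← map_pow, comp, hom_eval₂]
      congr 1
    obtain ⟨m, hm, hm1⟩ := domain_root_of_unity hfin (Ideal.Quotient.mk P X)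
      (by rwa [Ne, Ideal.Quotient.eq_zero_iff_mem]) (by
        intro j hj
        choose p hp1 hp2 hp3 using h j hj
        have : ∏ a ∈ s, (p a).comp (X ^ j) ∈ P := by
          apply hIP
          change aeval T (∏ a ∈ s, (p a).comp (X ^ j)) = 0
          apply LinearMap.ext_on_range (v := fun a : s => (a : A))
          · simpa using hs
          · rintro ⟨a, ha⟩
            rw [← Finset.prod_erase_mul _ _ ha, map_mul, Module.End.mul_apply, aeval_comp,
              map_pow, aeval_X, hp3]
            simp
        rw [hPp.prod_mem_iff] at this
        obtain ⟨a, _, ha⟩ := this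
        refine ⟨p a, hp1 a, hp2 a, ?_⟩
        rw [hval, Ideal.Quotient.eq_zero_iff_mem]
        exact ha)
    refine ⟨m, hm, P.mul_mem_left _ ?_⟩
    rw [← Ideal.Quotient.eq_zero_iff_mem, map_sub, map_pow, hm1, map_one, sub_self]
  choose! m hm0 hm using key
  have hfin : I.minimalPrimes.Finite := Ideal.finite_minimalPrimes_of_isNoetherianRing _ I
  let M := ∏ P ∈ hfin.toFinset, m P
  have hM : (X : ℤ[X]) * (X ^ M - 1) ∈ I.radical := by
    rw [← Ideal.sInf_minimalPrimes, Ideal.mem_sInf]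
    intro P hP
    have hdvd : m P ∣ M := Finset.dvd_prod_of_mem _ (by simpa using hP)
    obtain ⟨c, hc⟩ := hdvd
    have : (X : ℤ[X]) ^ m P - 1 ∣ X ^ M - 1 := by
      rw [hc, pow_mul]
      simpa using sub_dvd_pow_sub_pow ((X : ℤ[X]) ^ m P) 1 c
    exact P.mem_of_dvd (mul_dvd_mul_left _ this) (hm P hP)
  obtain ⟨k, hk⟩ := hM
  refine ⟨M, k, Finset.prod_pos fun P hP => hm0 P (by simpa using hP), ?_⟩
  have : aeval T (((X : ℤ[X]) * (X ^ M - 1)) ^ k) = 0 := hk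
  simpa [mul_pow] using this

/-! ### Polynomial growth and finite generation of kernels -/

open Pointwise in
/-- Polynomial growth: the number of products of `n` elements of a finite set is bounded by a
polynomial in `n`. Quantifying over all finite sets, rather than fixing a generating set, makes
the notion pass to arbitrary subgroups and quotients. -/
def PolyGrowth (G : Type*) [Group G] : Prop :=
  ∀ S : Set G, S.Finite → ∃ C d : ℕ, ∀ n : ℕ, (S ^ n).ncard ≤ C * (n + 1) ^ d

lemma set_finite_pow {G : Type*} [Group G] {S : Set G} (hS : S.Finite) (n : ℕ) :
    open Pointwise in (S ^ n).Finite := by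
  open Pointwise in
  induction n with
  | zero => simp
  | succ n ih => rw [pow_succ]; exact ih.mul hS

open Pointwise in
lemma PolyGrowth.of_injective {G H : Type*} [Group G] [Group H] (hG : PolyGrowth G) (f : H →* G)
    (hf : Function.Injective f) : PolyGrowth H := by
  intro S hS
  obtain ⟨C, d, h⟩ := hG (f '' S) (hS.image f)
  refine ⟨C, d, fun n => ?_⟩
  have h1 := h n
  rw [← Set.image_pow, Set.ncard_image_of_injective _ hf] at h1
  exact h1

open Pointwise in
lemma PolyGrowth.of_surjective {G H : Type*} [Group G] [Group H] (hG : PolyGrowth G) (f : G →* H)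
    (hf : Function.Surjective f) : PolyGrowth H := by
  intro S hS
  obtain ⟨g, hg⟩ := hf.hasRightInverse
  obtain ⟨C, d, h⟩ := hG (g '' S) (hS.image g)
  refine ⟨C, d, fun n => ?_⟩
  have hS' : S = f '' (g '' S) := by
    rw [Set.image_image]; simp [hg _]
  rw [hS', ← Set.image_pow]
  exact (Set.ncard_image_le (set_finite_pow (hS.image g) n)).trans (h n)

open Pointwise in
/-- The products `u₀ ^ ε₀ * t * u₁ ^ ε₁ * t * ⋯ * t` with `m` factors `uᵢ ^ εᵢ * t`, where each
`εᵢ` is `0` or `1`. -/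
def wordSet {G : Type*} [Group G] (t : G) (u : ℕ → G) : ℕ → Set G
  | 0 => {1}
  | m + 1 => wordSet t u m * {t, u m * t}

open Pointwise Filter in
/-- In a group of polynomial growth the `2 ^ m` words of `wordSet t u m` cannot be distinct for all
`m`, so two words that differ in their last exponent coincide. -/
lemma exists_collision {G : Type*} [Group G] (hG : PolyGrowth G) (t : G) (u : ℕ → G)
    (hu : (Set.range u).Finite) :
    ∃ m, ∃ x ∈ wordSet t u m, ∃ y ∈ wordSet t u m, x = y * u m := by
  by_contra! hcon
  have hfin : ∀ m, (wordSet t u m).Finite := by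
    intro m
    induction m with
    | zero => simp [wordSet]
    | succ m ih => exact ih.mul (by simp)
  have hcard : ∀ m, 2 ^ m ≤ (wordSet t u m).ncard := by
    intro m
    induction m with
    | zero => simp [wordSet]
    | succ m ih =>
      have hsplit : wordSet t u (m + 1)
          = (· * t) '' wordSet t u m ∪ (· * (u m * t)) '' wordSet t u m := by
        change wordSet t u m * {t, u m * t} = _
        rw [Set.insert_eq, Set.mul_union, Set.mul_singleton, Set.mul_singleton]
      have hdisj : Disjoint ((· * t) '' wordSet t u m) ((· * (u m * t)) '' wordSet t u m) := by
        rw [Set.disjoint_left]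
        rintro _ ⟨x, hx, rfl⟩ ⟨y, hy, hxy⟩
        refine hcon m x hx y hy ?_
        have : y * u m * t = x * t := by rw [mul_assoc]; exact hxy
        exact (mul_right_cancel this).symm
      rw [hsplit, Set.ncard_union_eq hdisj ((hfin m).image _) ((hfin m).image _),
        Set.ncard_image_of_injective _ (mul_left_injective _),
        Set.ncard_image_of_injective _ (mul_left_injective _), pow_succ]
      omega
  let Q : Set G := insert t ((· * t) '' Set.range u)
  have hQ : Q.Finite := (hu.image _).insert _
  have hsub : ∀ m, wordSet t u m ⊆ Q ^ m := by
    intro m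
    induction m with
    | zero => simp [wordSet]
    | succ m ih =>
      rw [pow_succ]
      refine Set.mul_subset_mul ih ?_
      rintro x (rfl | rfl)
      · exact Set.mem_insert _ _
      · exact Set.mem_insert_of_mem _ ⟨u m, ⟨m, rfl⟩, rfl⟩
  obtain ⟨C, d, h⟩ := hG Q hQ
  have hall : ∀ m : ℕ, (2 : ℝ) ^ m ≤ C * (m + 1) ^ d := by
    intro m
    have := (hcard m).trans ((Set.ncard_le_ncard (hsub m) (set_finite_pow hQ m)).trans (h m))
    exact_mod_cast this
  have hlim := (tendsto_pow_const_div_const_pow_of_one_lt d (one_lt_two (α := ℝ))).comp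
    (tendsto_add_atTop_nat 1)
  have hlim2 := hlim.const_mul (2 * C : ℝ)
  rw [mul_zero] at hlim2
  obtain ⟨m, hm⟩ := (hlim2.eventually (gt_mem_nhds one_pos)).exists
  have h2 := hall m
  simp only [Function.comp_apply, Nat.cast_add, Nat.cast_one, pow_succ (2 : ℝ)] at hm
  rw [← mul_div_assoc, div_lt_one (by positivity)] at hm
  nlinarith

/-- A word of `wordSet t u m` is a product of conjugates `t ^ i * u i * t ^ (-i)` with `i < m`,
followed by `t ^ m`. -/
lemma wordSet_mul_mem {G : Type*} [Group G] (t : G) (u : ℕ → G) (m : ℕ) (K : Subgroup G)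
    (hK : ∀ i < m, t ^ i * u i * (t ^ i)⁻¹ ∈ K) : ∀ x ∈ wordSet t u m, x * (t ^ m)⁻¹ ∈ K := by
  induction m with
  | zero => simp [wordSet, one_mem]
  | succ m ih =>
    rintro _ ⟨x, hx, z, hz, rfl⟩
    have h1 := ih (fun i hi => hK i (by omega)) x hx
    rcases hz with rfl | rfl
    · convert h1 using 1; simp only [pow_succ]; group
    · convert mul_mem h1 (hK m (by omega)) using 1; simp only [pow_succ]; group

/-- In a group of polynomial growth the conjugates of a finite set by the nonnegative powers of `t`
generate a finitely generated subgroup: a collision of words expresses a conjugate by `t ^ m`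
through conjugates by smaller powers. -/
lemma fg_closure_conj {G : Type*} [Group G] (hG : PolyGrowth G) (t : G) (F : Set G)
    (hF : F.Finite) : (Subgroup.closure {x | ∃ i : ℕ, ∃ f ∈ F, x = t ^ i * f * (t ^ i)⁻¹}).FG := by
  let N : ℕ → Subgroup G := fun m =>
    Subgroup.closure {x | ∃ i < m, ∃ f ∈ F, x = t ^ i * f * (t ^ i)⁻¹}
  have hNfg : ∀ m, (N m).FG := by
    intro m
    have : {x | ∃ i < m, ∃ f ∈ F, x = t ^ i * f * (t ^ i)⁻¹}.Finite := by
      have := ((Set.finite_lt_nat m).prod hF).image (fun p : ℕ × G => t ^ p.1 * p.2 * (t ^ p.1)⁻¹)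
      refine this.subset ?_
      rintro x ⟨i, hi, f, hf, rfl⟩
      exact ⟨(i, f), ⟨hi, hf⟩, rfl⟩
    exact ⟨this.toFinset, by simp [N]⟩
  have hex : ∃ m, ∀ f ∈ F, t ^ m * f * (t ^ m)⁻¹ ∈ N m := by
    by_contra! hcon
    choose u huF hu using hcon
    obtain ⟨m, x, hx, y, hy, hxy⟩ := exists_collision hG t u
      (hF.subset (by rintro _ ⟨i, rfl⟩; exact huF i))
    have hw := wordSet_mul_mem t u m (N m)
      (fun i hi => Subgroup.subset_closure ⟨i, hi, u i, huF i, rfl⟩)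
    apply hu m
    convert mul_mem (inv_mem (hw y hy)) (hw x hx) using 1
    rw [hxy]; group
  obtain ⟨m, hm⟩ := hex
  have hconj : ∀ x ∈ N m, t * x * t⁻¹ ∈ N m := by
    intro x hx
    have : N m ≤ (N m).comap (MulAut.conj t).toMonoidHom := by
      refine (Subgroup.closure_le _).2 ?_
      rintro _ ⟨i, hi, f, hf, rfl⟩
      change t * (t ^ i * f * (t ^ i)⁻¹) * t⁻¹ ∈ N m
      have heq : t * (t ^ i * f * (t ^ i)⁻¹) * t⁻¹ = t ^ (i + 1) * f * (t ^ (i + 1))⁻¹ := by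
        rw [pow_succ']; group
      rw [heq]
      rcases Nat.lt_or_ge (i + 1) m with h | h
      · exact Subgroup.subset_closure ⟨_, h, f, hf, rfl⟩
      · have : i + 1 = m := by omega
        rw [this]; exact hm f hf
    exact this hx
  have hall : ∀ i : ℕ, ∀ f ∈ F, t ^ i * f * (t ^ i)⁻¹ ∈ N m := by
    intro i f hf
    induction i with
    | zero =>
      rcases Nat.eq_zero_or_pos m with h | h
      · have := hm f hf; rwa [h] at this ⊢
      · exact Subgroup.subset_closure ⟨0, h, f, hf, rfl⟩
    | succ i ih =>
      convert hconj _ ih using 1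
      rw [pow_succ']; group
  have : Subgroup.closure {x | ∃ i : ℕ, ∃ f ∈ F, x = t ^ i * f * (t ^ i)⁻¹} = N m := by
    apply le_antisymm
    · refine (Subgroup.closure_le _).2 ?_
      rintro _ ⟨i, f, hf, rfl⟩
      exact hall i f hf
    · refine Subgroup.closure_mono ?_
      rintro _ ⟨i, -, f, hf, rfl⟩
      exact ⟨i, f, hf, rfl⟩
  rw [this]; exact hNfg m

/-- If `E / N` is generated by the image of `s`, then the image of any subgroup `L` is generated by
the image of a single element of `L`. -/
lemma exists_cyclic_lift {E : Type*} [Group E] (N : Subgroup E) [N.Normal] (s : E)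
    (hs : ∀ x, ∃ i : ℤ, x * s ^ i ∈ N) (L : Subgroup E) :
    ∃ l ∈ L, ∀ x ∈ L, ∃ i : ℤ, x * l ^ i ∈ N := by
  have hcyc : IsCyclic (E ⧸ N) := by
    refine ⟨QuotientGroup.mk s, fun q => ?_⟩
    obtain ⟨x, rfl⟩ := QuotientGroup.mk_surjective q
    obtain ⟨i, hi⟩ := hs x
    refine ⟨-i, ?_⟩
    change (QuotientGroup.mk s : E ⧸ N) ^ (-i) = _
    rw [← QuotientGroup.mk_zpow, eq_comm, QuotientGroup.eq]
    have h1 := inv_mem ((inferInstance : N.Normal).mem_comm hi)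
    simpa [-inv_mem_iff] using h1
  let M : Subgroup (E ⧸ N) := L.map (QuotientGroup.mk' N)
  obtain ⟨⟨g, hg⟩, hgen⟩ := (inferInstance : IsCyclic M).exists_generator
  obtain ⟨l, hl, rfl⟩ := hg
  refine ⟨l, hl, fun x hx => ?_⟩
  obtain ⟨i, hi⟩ := hgen ⟨QuotientGroup.mk' N x, x, hx, rfl⟩
  refine ⟨-i, ?_⟩
  have hi' : (QuotientGroup.mk' N l) ^ i = QuotientGroup.mk' N x := congrArg Subtype.val hi
  rw [← QuotientGroup.ker_mk' N, MonoidHom.mem_ker, map_mul, map_zpow, ← hi']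
  group

lemma fg_map {G H : Type*} [Group G] [Group H] (f : G →* H) {K : Subgroup G} (hK : K.FG) :
    (K.map f).FG := by
  classical
  obtain ⟨S, hS⟩ := hK
  exact ⟨S.image f, by rw [Finset.coe_image, ← MonoidHom.map_closure, hS]⟩

/-- Milnor's lemma: in a finitely generated group of polynomial growth, a normal subgroup with
cyclic quotient is finitely generated. -/
lemma milnor_fg {E : Type*} [Group E] [Group.FG E] (hE : PolyGrowth E) (N : Subgroup E) [N.Normal]
    (s : E) (hs : ∀ x, ∃ i : ℤ, x * s ^ i ∈ N) : N.FG := by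
  obtain ⟨S, hS⟩ := Group.fg_def.1 (inferInstance : Group.FG E)
  choose e he using hs
  let F : Set E := (fun x => x * s ^ e x) '' S
  have hF : F.Finite := S.finite_toSet.image _
  have hFN : F ⊆ N := by rintro _ ⟨x, -, rfl⟩; exact he x
  let P := Subgroup.closure {x | ∃ i : ℕ, ∃ f ∈ F, x = s ^ i * f * (s ^ i)⁻¹}
  let P' := Subgroup.closure {x | ∃ i : ℕ, ∃ f ∈ F, x = s⁻¹ ^ i * f * (s⁻¹ ^ i)⁻¹}
  let M := P ⊔ P'
  have hPM : ∀ i : ℤ, ∀ f ∈ F, s ^ i * f * (s ^ i)⁻¹ ∈ M := by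
    intro i f hf
    rcases Int.eq_nat_or_neg i with ⟨n, rfl | rfl⟩
    · exact Subgroup.mem_sup_left (Subgroup.subset_closure ⟨n, f, hf, by simp⟩)
    · exact Subgroup.mem_sup_right (Subgroup.subset_closure ⟨n, f, hf, by simp⟩)
  have hMle : ∀ K : Subgroup E, (∀ i : ℤ, ∀ f ∈ F, s ^ i * f * (s ^ i)⁻¹ ∈ K) → M ≤ K := by
    intro K hK
    refine sup_le ((Subgroup.closure_le _).2 ?_) ((Subgroup.closure_le _).2 ?_)
    · rintro _ ⟨n, f, hf, rfl⟩
      have := hK n f hf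
      rwa [zpow_natCast] at this
    · rintro _ ⟨n, f, hf, rfl⟩
      have := hK (-n) f hf
      rwa [zpow_neg, ← inv_zpow, zpow_natCast] at this
  have hMN : M ≤ N := hMle N fun i f hf => (inferInstance : N.Normal).conj_mem _ (hFN hf) _
  have hconj : ∀ j : ℤ, ∀ x ∈ M, s ^ j * x * (s ^ j)⁻¹ ∈ M := by
    intro j x hx
    have : M ≤ M.comap (MulAut.conj (s ^ j)).toMonoidHom := by
      apply hMle
      intro i f hf
      change s ^ j * (s ^ i * f * (s ^ i)⁻¹) * (s ^ j)⁻¹ ∈ M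
      convert hPM (j + i) f hf using 1
      rw [zpow_add]; group
    exact this hx
  -- every element of `E` is in `M * ⟨s⟩`
  have hdec : ∀ x : E, ∃ i : ℤ, x * s ^ i ∈ M := by
    let D : Subgroup E :=
      { carrier := {x | ∃ i : ℤ, x * s ^ i ∈ M}
        one_mem' := ⟨0, by simp [one_mem]⟩
        mul_mem' := by
          rintro x y ⟨i, hi⟩ ⟨j, hj⟩
          refine ⟨j + i, ?_⟩
          have := mul_mem hi (hconj (-i) _ hj)
          convert this using 1
          rw [zpow_add]; group
        inv_mem' := by
          rintro x ⟨i, hi⟩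
          refine ⟨-i, ?_⟩
          have := hconj i _ (inv_mem hi)
          convert this using 1
          group }
    have : D = ⊤ := by
      rw [eq_top_iff, ← hS, Subgroup.closure_le]
      intro x hx
      refine ⟨e x, ?_⟩
      have := hPM 0 (x * s ^ e x) ⟨x, hx, rfl⟩
      simpa using this
    intro x
    have hx : x ∈ D := this ▸ Subgroup.mem_top x
    exact hx
  have hcycfg : (N ⊓ Subgroup.zpowers s).FG := by
    have h1 : IsCyclic (Subgroup.zpowers s) := inferInstance
    have h2 : IsCyclic (N.subgroupOf (Subgroup.zpowers s)) := inferInstance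
    have h3 : (N.subgroupOf (Subgroup.zpowers s)).FG := by
      obtain ⟨g, hg⟩ := (Subgroup.isCyclic_iff_exists_zpowers_eq_top _).1 h2
      exact ⟨{g}, by rw [← hg]; simp [Subgroup.zpowers_eq_closure]⟩
    have h4 := fg_map (Subgroup.zpowers s).subtype h3
    rwa [Subgroup.subgroupOf_map_subtype] at h4
  have hN : N = M ⊔ (N ⊓ Subgroup.zpowers s) := by
    apply le_antisymm
    · intro x hx
      obtain ⟨i, hi⟩ := hdec x
      have h1 : s ^ i ∈ N := by
        have := mul_mem (inv_mem hx) (hMN hi)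
        simpa using this
      have h2 : x = (x * s ^ i) * (s ^ i)⁻¹ := by group
      rw [h2]
      exact mul_mem (Subgroup.mem_sup_left hi)
        (Subgroup.mem_sup_right (inv_mem ⟨h1, i, rfl⟩))
    · exact sup_le hMN inf_le_left
  rw [hN]
  exact ((fg_closure_conj hE s F hF).sup (fg_closure_conj hE s⁻¹ F hF)).sup hcycfg

/-! ### Unipotent action on abelian layers -/

open Polynomial commutatorElement in
/-- Wolf's dichotomy on an abelian layer. A collision of words in a single `a` and `t ^ j` is a monic
relation with coefficients in `{-1, 0, 1}` for the conjugation by `t ^ j` at `a`, so a power of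
the conjugation by `t` is unipotent on `A`. -/
lemma exists_unipotent_power {E : Type*} [Group E] (hE : PolyGrowth E) (A : Subgroup E) [A.Normal]
    (hab : ∀ a ∈ A, ∀ b ∈ A, a * b = b * a) (hfg : A.FG) (t : E) :
    ∃ m k : ℕ, 0 < m ∧ ∀ j : ℕ, ∀ a ∈ A, (fun x => ⁅t ^ (m * j), x⁆)^[k] a = 1 := by
  let _ : CommGroup A := { (inferInstance : Group A) with
    mul_comm := fun a b => Subtype.ext (hab a a.2 b b.2) }
  have : Group.FG A := (Group.fg_iff_subgroup_fg A).2 hfg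
  have : Module.Finite ℤ (Additive A) := Module.Finite.iff_addGroup_fg.2 inferInstance
  let c : A →* A := (MulAut.conjNormal t : MulAut A).toMonoidHom
  have hc : ∀ a : A, (c a : E) = t * a * t⁻¹ := fun a => by
    change ((MulAut.conjNormal t a : A) : E) = _
    simp
  let T : Module.End ℤ (Additive A) := (MonoidHom.toAdditive c).toIntLinearMap
  let v : Additive A → E := fun a => (a.toMul : E)
  have hvinj : Function.Injective v := fun a b h => Additive.toMul.injective (Subtype.ext h)
  have hvadd : ∀ a b, v (a + b) = v a * v b := fun a b => rfl
  have hvsub : ∀ a b, v (a - b) = v a * (v b)⁻¹ := fun a b => by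
    rw [sub_eq_add_neg]; rfl
  have hvT : ∀ a, v (T a) = t * v a * t⁻¹ := fun a => hc a.toMul
  have hvTn : ∀ n : ℕ, ∀ a, v ((T ^ n) a) = t ^ n * v a * (t ^ n)⁻¹ := by
    intro n
    induction n with
    | zero => intro a; simp
    | succ n ih =>
      intro a
      rw [pow_succ, Module.End.mul_apply, ih, hvT, pow_succ]; group
  have hvTm : ∀ j m : ℕ, ∀ a, v (((T ^ j) ^ m) a) = (t ^ j) ^ m * v a * ((t ^ j) ^ m)⁻¹ := by
    intro j m a
    rw [← pow_mul, hvTn, pow_mul]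
  have hinj : Function.Injective T := by
    intro a b h
    have := congrArg v h
    rw [hvT, hvT] at this
    exact hvinj (by simpa using this)
  -- a word in `a` and `t ^ j` is, up to `t ^ (j * m)`, a `{0, 1}`-polynomial in `T ^ j` at `a`
  have hkey : ∀ j > 0, ∀ a, ∃ p : ℤ[X], p.Monic ∧ (∀ i, |p.coeff i| ≤ 1) ∧
      aeval (T ^ j) p a = 0 := by
    intro j _ a
    have hword : ∀ m, ∀ x ∈ wordSet (t ^ j) (fun _ => v a) m, ∃ q : ℤ[X],
        (∀ i, q.coeff i = 0 ∨ q.coeff i = 1) ∧ (∀ i, m ≤ i → q.coeff i = 0) ∧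
        x * ((t ^ j) ^ m)⁻¹ = v (aeval (T ^ j) q a) := by
      intro m
      induction m with
      | zero =>
        rintro x rfl
        exact ⟨0, by simp, by simp, by simp [v]⟩
      | succ m ih =>
        rintro _ ⟨x, hx, z, hz, rfl⟩
        obtain ⟨q, h1, h2, h3⟩ := ih x hx
        rcases hz with rfl | rfl
        · refine ⟨q, h1, fun i hi => h2 i (by omega), ?_⟩
          rw [← h3, pow_succ (t ^ j) m]; group
        · refine ⟨q + X ^ m, fun i => ?_, fun i hi => ?_, ?_⟩
          · rw [coeff_add, coeff_X_pow]
            split_ifs with h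
            · rw [h2 i h.ge]; simp
            · simpa using h1 i
          · rw [coeff_add, coeff_X_pow, h2 i (by omega), if_neg (by omega)]; simp
          · rw [map_add, LinearMap.add_apply, hvadd, ← h3, map_pow, aeval_X, hvTm,
              pow_succ (t ^ j) m]
            group
    obtain ⟨m, x, hx, y, hy, hxy⟩ := exists_collision hE (t ^ j) (fun _ => v a)
      ((Set.finite_singleton (v a)).subset (by rintro _ ⟨i, rfl⟩; rfl))
    obtain ⟨q, q1, q2, q3⟩ := hword m x hx
    obtain ⟨r, r1, r2, r3⟩ := hword m y hy
    refine ⟨X ^ m + (r - q), monic_X_pow_add ?_, fun i => ?_, ?_⟩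
    · rw [degree_lt_iff_coeff_zero]
      intro i hi
      rw [coeff_sub, q2 i hi, r2 i hi, sub_zero]
    · rw [coeff_add, coeff_X_pow, coeff_sub]
      split_ifs with h
      · rw [q2 i h.ge, r2 i h.ge]; simp
      · rcases q1 i with h1 | h1 <;> rcases r1 i with h2 | h2 <;> simp [h1, h2]
    · apply hvinj
      rw [map_add, map_sub, LinearMap.add_apply, LinearMap.sub_apply, add_sub, add_comm, hvsub,
        hvadd, ← q3, ← r3, map_pow, aeval_X, hvTm, hxy]
      change _ = (1 : E)
      group
  obtain ⟨m, k, hm, hmk⟩ := exists_pow_unipotent T hkey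
  have hpow : (T ^ m - 1) ^ k = 0 := by
    ext1 a
    have hTk : Function.Injective (T ^ k) := by
      rw [Module.End.coe_pow]; exact hinj.iterate k
    apply hTk
    have := LinearMap.congr_fun hmk a
    simpa using this
  refine ⟨m, k, hm, fun j a ha => ?_⟩
  have hpow2 : (T ^ (m * j) - 1) ^ k = 0 := by
    rw [pow_mul, ← mul_geom_sum, Commute.mul_pow, hpow, zero_mul]
    refine Commute.sum_right _ _ _ fun i _ => ?_
    exact ((Commute.refl _).sub_left (Commute.one_left _)).pow_right i
  have hiter : ∀ i (b : Additive A), v (((T ^ (m * j) - 1) ^ i) b)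
      = (fun x => ⁅t ^ (m * j), x⁆)^[i] (v b) := by
    intro i
    induction i with
    | zero => intro b; simp
    | succ i ih =>
      intro b
      rw [pow_succ, Module.End.mul_apply, ih, Function.iterate_succ_apply, LinearMap.sub_apply,
        hvsub, hvTn]
      rfl
  have := hiter k (Additive.ofMul ⟨a, ha⟩)
  rw [hpow2] at this
  exact this.symm

/-! ### Nilpotency of generated subgroups -/

open commutatorElement in
lemma commutator_mem_of_generators {H : Type*} [Group H] (Z N : Subgroup H) [Z.Normal] (s x : H)
    (hgen : N ⊔ Subgroup.zpowers s = ⊤) (hN : ∀ n ∈ N, ⁅n, x⁆ ∈ Z) (hs : ⁅s, x⁆ ∈ Z) (h : H) :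
    ⁅h, x⁆ ∈ Z := by
  let q := QuotientGroup.mk' Z
  let D : Subgroup H := (Subgroup.centralizer {q x}).comap q
  have hD : ∀ y, y ∈ D ↔ ⁅y, x⁆ ∈ Z := by
    intro y
    rw [← QuotientGroup.ker_mk' Z, MonoidHom.mem_ker, map_commutatorElement,
      commutatorElement_eq_one_iff_mul_comm, Subgroup.mem_comap, Subgroup.mem_centralizer_iff]
    simp [q, eq_comm]
  have : D = ⊤ := by
    rw [eq_top_iff, ← hgen, sup_le_iff, Subgroup.zpowers_le]
    exact ⟨fun n hn => (hD n).2 (hN n hn), (hD s).2 hs⟩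
  exact (hD h).1 (this ▸ Subgroup.mem_top h)

open commutatorElement in
/-- If modulo `M` the layer `L` is killed by an iterate of `⁅s, ·⁆` and centralised by `N`, where
`N` and `s` generate the group, then `L` sits finitely many steps above `M` in the upper central
series. -/
lemma le_upperCentralSeries_add {H : Type*} [Group H] (N L M : Subgroup H) (s : H)
    (hgen : N ⊔ Subgroup.zpowers s = ⊤) (c k : ℕ) (hM : M ≤ Subgroup.upperCentralSeries H c)
    (hNL : ∀ n ∈ N, ∀ x ∈ L, ⁅n, x⁆ ∈ M) (hsL : ∀ x ∈ L, ⁅s, x⁆ ∈ L)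
    (hk : ∀ x ∈ L, (fun y => ⁅s, y⁆)^[k] x ∈ M) :
    L ≤ Subgroup.upperCentralSeries H (c + k) := by
  have key : ∀ j, ∀ x ∈ L, (fun y => ⁅s, y⁆)^[j] x ∈ M →
      x ∈ Subgroup.upperCentralSeries H (c + j) := by
    intro j
    induction j with
    | zero => exact fun x _ hx => hM hx
    | succ j ih =>
      intro x hx hjx
      rw [← add_assoc, Subgroup.mem_upperCentralSeries_succ_iff]
      intro y
      have h1 := ih _ (hsL x hx) hjx
      have h2 := commutator_mem_of_generators (Subgroup.upperCentralSeries H (c + j)) N s x hgen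
        (fun n hn => Subgroup.upperCentralSeries_mono H (Nat.le_add_right c j)
          (hM (hNL n hn x hx))) h1 y
      rw [← commutatorElement_inv]
      exact inv_mem h2
  exact fun x hx => key k x hx (hk x hx)

open commutatorElement in
/-- A nilpotent normal subgroup together with one element `s` acting unipotently on each of its lower
central layers generates a nilpotent group. -/
lemma isNilpotent_of_generators {H : Type*} [Group H] (N : Subgroup H) [N.Normal] (s : H)
    (hgen : N ⊔ Subgroup.zpowers s = ⊤) (c : ℕ) (hc : N.lowerCentralSeries c = ⊥)
    (hk : ∀ i, ∃ k, ∀ x ∈ N.lowerCentralSeries i,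
      (fun y => ⁅s, y⁆)^[k] x ∈ N.lowerCentralSeries (i + 1)) :
    Group.IsNilpotent H := by
  have hnorm : ∀ i, (N.lowerCentralSeries i).Normal := by
    intro i
    induction i with
    | zero => rw [Subgroup.lowerCentralSeries_zero]; infer_instance
    | succ i ih => rw [Subgroup.lowerCentralSeries_succ]; infer_instance
  have key : ∀ i, ∃ b, N.lowerCentralSeries (c - i) ≤ Subgroup.upperCentralSeries H b := by
    intro i
    induction i with
    | zero => exact ⟨0, by rw [Nat.sub_zero, hc]; exact bot_le⟩
    | succ i ih =>
      obtain ⟨b, hb⟩ := ih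
      by_cases hi : c ≤ i
      · exact ⟨b, by rwa [show c - (i + 1) = c - i by omega]⟩
      · obtain ⟨k, hk⟩ := hk (c - (i + 1))
        refine ⟨b + k, le_upperCentralSeries_add N _ (N.lowerCentralSeries (c - i)) s hgen b k hb
          ?_ ?_ ?_⟩
        · intro n hn x hx
          rw [show c - i = c - (i + 1) + 1 by omega, Subgroup.lowerCentralSeries_succ,
            Subgroup.commutator_comm]
          exact Subgroup.commutator_mem_commutator hn hx
        · intro x hx
          have := hnorm (c - (i + 1))
          exact mul_mem (this.conj_mem x hx s) (inv_mem hx)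
        · rwa [show c - i = c - (i + 1) + 1 by omega]
  obtain ⟨b, hb⟩ := key c
  rw [Nat.sub_self, Subgroup.lowerCentralSeries_zero] at hb
  refine ⟨b + 1, ?_⟩
  rw [eq_top_iff]
  intro x _
  rw [Subgroup.mem_upperCentralSeries_succ_iff]
  intro y
  have hconj : ∀ z, ∀ n ∈ N, ⁅n, z⁆ ∈ N := fun z n hn => by
    rw [commutatorElement_def, mul_assoc, mul_assoc, ← mul_assoc z]
    exact mul_mem hn ((inferInstance : N.Normal).conj_mem _ (inv_mem hn) z)
  have h1 : ∀ h, ⁅h, s⁆ ∈ N := commutator_mem_of_generators N N s s hgen (hconj s)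
    (by simp [one_mem])
  refine hb (commutator_mem_of_generators N N s y hgen (hconj y) ?_ x)
  rw [← commutatorElement_inv]
  exact inv_mem (h1 y)

/-- A finitely generated, virtually nilpotent normal subgroup contains, with finite index, a
nilpotent subgroup that is normal in the whole group: the common kernel of the finitely many
permutation representations of given degree is characteristic. -/
lemma exists_normal_nilpotent {E : Type*} [Group E] (N : Subgroup E) [N.Normal] (hfg : N.FG)
    (hN : VirtuallyNilpotent N) : ∃ M : Subgroup E, M.Normal ∧ M ≤ N ∧
      Group.IsNilpotent M ∧ (M.subgroupOf N).FiniteIndex := by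
  obtain ⟨H, hH, hnil⟩ := hN
  obtain ⟨S, hS⟩ := hfg
  have hgfg : Group.FG N := (Group.fg_iff_subgroup_fg N).2 ⟨S, hS⟩
  obtain ⟨S, hS⟩ := Group.fg_def.1 hgfg
  have hfin : Finite (N →* Equiv.Perm (N ⧸ H)) := by
    refine Finite.of_injective (fun φ => fun s : S => φ s) fun φ ψ h => ?_
    refine MonoidHom.eq_of_eqOn_dense hS fun s hs => ?_
    exact congrFun h ⟨s, hs⟩
  let P : Subgroup N := ⨅ φ : N →* Equiv.Perm (N ⧸ H), φ.ker
  have hPfin : P.FiniteIndex := Subgroup.finiteIndex_iInf fun φ => inferInstance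
  have hPH : P ≤ H := by
    refine (iInf_le _ (MulAction.toPermHom N (N ⧸ H))).trans ?_
    rw [← Subgroup.normalCore_eq_ker]
    exact H.normalCore_le
  have hchar : P.Characteristic := by
    rw [Subgroup.characteristic_iff_le_comap]
    intro α
    rw [Subgroup.comap_iInf]
    exact le_iInf fun φ => (iInf_le _ (φ.comp α.toMonoidHom)).trans (by rw [MonoidHom.comap_ker])
  refine ⟨P.map N.subtype, inferInstance, ?_, ?_, ?_⟩
  · exact Subgroup.map_subtype_le P
  · rw [Subgroup.isNilpotent_iff_lowerCentralSeries] at hnil ⊢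
    obtain ⟨n, hn⟩ := hnil
    refine ⟨n, ?_⟩
    rw [← Subgroup.map_lowerCentralSeries, Subgroup.map_eq_bot_iff_of_injective _
      N.subtype_injective, eq_bot_iff, ← hn]
    exact Subgroup.lowerCentralSeries_mono n hPH
  · have : (P.map N.subtype).subgroupOf N = P := by
      rw [Subgroup.subgroupOf, Subgroup.comap_map_eq_self_of_injective N.subtype_injective]
    rwa [this]

/-! ### Cyclic extensions of virtually nilpotent groups -/

/-- If `E / N` is generated by the image of `s` and `M` has finite index in `N`, then `M` and any
positive power of `s` generate a subgroup of finite index in `E`. -/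
lemma finiteIndex_sup_zpowers {E : Type*} [Group E] (N M : Subgroup E) [N.Normal] [hMn : M.Normal]
    (hMN : (M.subgroupOf N).FiniteIndex) (s : E)
    (hs : ∀ x, ∃ i : ℤ, x * s ^ i ∈ N) (m : ℕ) (hm : 0 < m) :
    (M ⊔ Subgroup.zpowers (s ^ m)).FiniteIndex := by
  set H := M ⊔ Subgroup.zpowers (s ^ m) with hH
  have hfin : Finite (N ⧸ M.subgroupOf N) := inferInstance
  let φ : (N ⧸ M.subgroupOf N) × Fin m → E ⧸ H := fun p => ((p.1.out : E) * s ^ (p.2 : ℕ) : E)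
  have hφ : Function.Surjective φ := by
    intro q
    obtain ⟨x, rfl⟩ := QuotientGroup.mk_surjective q
    obtain ⟨i, hi⟩ := hs x
    have hmz : (0 : ℤ) < m := by exact_mod_cast hm
    let r := ((-i) % m).toNat
    have hr : (r : ℤ) = (-i) % m := Int.toNat_of_nonneg (Int.emod_nonneg _ hmz.ne')
    have hrm : r < m := by
      have := Int.emod_lt_of_pos (-i) hmz
      omega
    have hd : -i = r + m * ((-i) / m) := by rw [hr]; exact (Int.emod_add_mul_ediv _ _).symm
    let n : N := ⟨x * s ^ i, hi⟩
    refine ⟨(QuotientGroup.mk n, ⟨r, hrm⟩), ?_⟩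
    rw [QuotientGroup.eq]
    obtain ⟨⟨h, hhM⟩, hh⟩ := QuotientGroup.mk_out_eq_mul (M.subgroupOf N) n
    rw [Subgroup.mem_subgroupOf] at hhM
    change (((QuotientGroup.mk n : N ⧸ M.subgroupOf N).out : E) * s ^ r)⁻¹ * x ∈ H
    rw [hh]
    have hx : x = x * s ^ i * s ^ (-i) := by group
    have h1 : (((n * h : N) : E) * s ^ r)⁻¹ * x
        = ((s ^ r)⁻¹ * (h : E)⁻¹ * ((s ^ r)⁻¹)⁻¹) * (s ^ m) ^ ((-i) / (m : ℤ)) := by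
      conv_lhs => rw [hx, hd, zpow_add, zpow_mul, zpow_natCast, zpow_natCast]
      simp only [n, Subgroup.coe_mul]
      group
    rw [h1]
    exact mul_mem (Subgroup.mem_sup_left (hMn.conj_mem _ (inv_mem hhM) _))
      (Subgroup.mem_sup_right ⟨_, rfl⟩)
  have : Finite (E ⧸ H) := Finite.of_surjective φ hφ
  exact Subgroup.finiteIndex_of_finite_quotient

open commutatorElement in
/-- Wolf's theorem for a cyclic extension of a virtually nilpotent group. -/
lemma virtuallyNilpotent_of_cyclic_extension {E : Type*} [Group E] (hE : PolyGrowth E)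
    (hnoeth : ∀ L : Subgroup E, L.FG) (N : Subgroup E) [N.Normal] (hN : VirtuallyNilpotent N)
    (s : E) (hs : ∀ x, ∃ i : ℤ, x * s ^ i ∈ N) : VirtuallyNilpotent E := by
  obtain ⟨M, hMn, hMN, hnil, hMfin⟩ := exists_normal_nilpotent N (hnoeth N) hN
  obtain ⟨c, hc⟩ := (Subgroup.isNilpotent_iff_lowerCentralSeries M).1 hnil
  have hnorm : ∀ i, (M.lowerCentralSeries i).Normal := by
    intro i
    induction i with
    | zero => rw [Subgroup.lowerCentralSeries_zero]; infer_instance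
    | succ i ih => rw [Subgroup.lowerCentralSeries_succ]; infer_instance
  have hlayer : ∀ i, ∃ m k : ℕ, 0 < m ∧ ∀ j : ℕ, ∀ x ∈ M.lowerCentralSeries i,
      (fun y => ⁅s ^ (m * j), y⁆)^[k] x ∈ M.lowerCentralSeries (i + 1) := by
    intro i
    have := hnorm (i + 1)
    have := hnorm i
    let q := QuotientGroup.mk' (M.lowerCentralSeries (i + 1))
    have hq : Function.Surjective q := QuotientGroup.mk'_surjective _
    have hnormA : ((M.lowerCentralSeries i).map q).Normal := Subgroup.Normal.map this q hq
    have hab : ∀ a ∈ (M.lowerCentralSeries i).map q, ∀ b ∈ (M.lowerCentralSeries i).map q,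
        a * b = b * a := by
      rintro _ ⟨a, ha, rfl⟩ _ ⟨b, hb, rfl⟩
      rw [← commutatorElement_eq_one_iff_mul_comm, ← map_commutatorElement, ← MonoidHom.mem_ker,
        QuotientGroup.ker_mk', Subgroup.lowerCentralSeries_succ]
      exact Subgroup.commutator_mem_commutator ha (M.lowerCentralSeries_le_self i hb)
    obtain ⟨m, k, hm, h⟩ := exists_unipotent_power (hE.of_surjective q hq)
      ((M.lowerCentralSeries i).map q) hab (fg_map q (hnoeth _)) (q s)
    refine ⟨m, k, hm, fun j x hx => ?_⟩
    have h1 := h j (q x) ⟨x, hx, rfl⟩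
    have h2 : Function.Semiconj q (fun y => ⁅s ^ (m * j), y⁆) (fun y => ⁅(q s) ^ (m * j), y⁆) :=
      fun y => by simp only [map_commutatorElement, map_pow]
    rw [← QuotientGroup.ker_mk' (M.lowerCentralSeries (i + 1)), MonoidHom.mem_ker,
      (h2.iterate_right k) x]
    exact h1
  choose m k hm hmk using hlayer
  -- one power of `s` that is unipotent on all the layers simultaneously
  let p := ∏ i ∈ Finset.range c, m i
  have hp : 0 < p := Finset.prod_pos fun i _ => hm i
  refine ⟨M ⊔ Subgroup.zpowers (s ^ p), finiteIndex_sup_zpowers N M hMfin s hs p hp, ?_⟩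
  set H := M ⊔ Subgroup.zpowers (s ^ p) with hH
  have hMH : M ≤ H := le_sup_left
  have hsH : s ^ p ∈ H := Subgroup.mem_sup_right (Subgroup.mem_zpowers _)
  have hlcs : ∀ i, ∀ x : H, x ∈ (M.subgroupOf H).lowerCentralSeries i ↔
      (x : E) ∈ M.lowerCentralSeries i := by
    intro i x
    have : M.lowerCentralSeries i = ((M.subgroupOf H).lowerCentralSeries i).map H.subtype := by
      rw [Subgroup.map_lowerCentralSeries, Subgroup.map_subgroupOf_eq_of_le hMH]
    rw [this]
    simp
  refine isNilpotent_of_generators (M.subgroupOf H) ⟨s ^ p, hsH⟩ ?_ c ?_ ?_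
  · apply Subgroup.map_injective H.subtype_injective
    rw [Subgroup.map_sup, Subgroup.map_subgroupOf_eq_of_le hMH, MonoidHom.map_zpowers,
      ← MonoidHom.range_eq_map, Subgroup.range_subtype]
    rfl
  · rw [eq_bot_iff]
    intro x hx
    rw [hlcs, hc, Subgroup.mem_bot] at hx
    exact Subgroup.mem_bot.2 (Subtype.ext hx)
  · intro i
    by_cases hi : i < c
    · obtain ⟨j, hj⟩ := Finset.dvd_prod_of_mem m (Finset.mem_range.2 hi)
      refine ⟨k i, fun x hx => ?_⟩
      rw [hlcs] at hx ⊢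
      have h1 := hmk i j x hx
      have h2 : Function.Semiconj H.subtype (fun y => ⁅(⟨s ^ p, hsH⟩ : H), y⁆)
        (fun y => ⁅s ^ (m i * j), y⁆) := fun y => by
          simp only [map_commutatorElement, ← hj]; rfl
      have h3 := (h2.iterate_right (k i)) x
      change _ = (fun y => ⁅s ^ (m i * j), y⁆)^[k i] (x : E) at h3
      rw [← h3] at h1
      exact h1
    · refine ⟨0, fun x hx => ?_⟩
      have h1 := (M.lowerCentralSeries_antitone (not_lt.1 hi)) ((hlcs i x).1 hx)
      rw [hc, Subgroup.mem_bot] at h1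
      rw [hlcs, Function.iterate_zero, id, h1]
      exact one_mem _

/-! ### Solvable groups of polynomial growth -/

/-- Every finitely generated subgroup of `K` is Noetherian and virtually nilpotent. -/
def LocallyVirtNil {G : Type*} [Group G] (K : Subgroup G) : Prop :=
  ∀ H ≤ K, H.FG → (∀ L ≤ H, L.FG) ∧ VirtuallyNilpotent H

lemma VirtuallyNilpotent.of_mulEquiv {G H : Type*} [Group G] [Group H] (e : G ≃* H)
    (hG : VirtuallyNilpotent G) : VirtuallyNilpotent H := by
  obtain ⟨K, hK, hn⟩ := hG
  refine ⟨K.map e.toMonoidHom, ⟨?_⟩, ?_⟩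
  · have := Subgroup.index_map_equiv K e
    have h2 := hK.index_ne_zero
    rw [← this] at h2
    exact h2
  · rw [Subgroup.isNilpotent_iff_lowerCentralSeries] at hn ⊢
    obtain ⟨n, hn⟩ := hn
    exact ⟨n, by rw [← Subgroup.map_lowerCentralSeries, hn, Subgroup.map_bot]⟩

lemma VirtuallyNilpotent.of_finiteIndex {G : Type*} [Group G] (H : Subgroup G) [H.FiniteIndex]
    (hH : VirtuallyNilpotent H) : VirtuallyNilpotent G := by
  obtain ⟨K, hK, hn⟩ := hH
  refine ⟨K.map H.subtype, ⟨?_⟩, ?_⟩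
  · rw [Subgroup.index_map_subtype]
    exact mul_ne_zero hK.index_ne_zero Subgroup.FiniteIndex.index_ne_zero
  · rw [Subgroup.isNilpotent_iff_lowerCentralSeries] at hn ⊢
    obtain ⟨n, hn⟩ := hn
    exact ⟨n, by rw [← Subgroup.map_lowerCentralSeries, hn, Subgroup.map_bot]⟩

lemma fg_of_fg_map {G : Type*} [Group G] {H : Subgroup G} {L : Subgroup H}
    (h : (L.map H.subtype).FG) : L.FG := by
  have e := L.equivMapOfInjective H.subtype H.subtype_injective
  rw [← Group.fg_iff_subgroup_fg] at h ⊢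
  exact Group.fg_of_surjective (f := e.symm.toMonoidHom) e.symm.surjective

/-- The class is stable under extension by one element `t`: Milnor's lemma makes the trace of `K` on
a finitely generated subgroup of `K'` finitely generated, and Wolf's theorem applies. -/
lemma LocallyVirtNil.step {G : Type*} [Group G] (hG : PolyGrowth G) {K K' : Subgroup G}
    (hK : LocallyVirtNil K) (hnorm : ∀ x ∈ K', ∀ k ∈ K, x * k * x⁻¹ ∈ K)
    (t : G) (ht : t ∈ K') (hKt : ∀ x ∈ K', ∃ i : ℤ, x * t ^ i ∈ K) : LocallyVirtNil K' := by
  have hlift : ∀ L ≤ K', ∃ l ∈ L, ∀ x ∈ L, ∃ i : ℤ, x * l ^ i ∈ K := by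
    intro L hL
    have : (K.subgroupOf K').Normal := ⟨fun n hn x => hnorm x x.2 n hn⟩
    obtain ⟨l, hl, h⟩ := exists_cyclic_lift (K.subgroupOf K') ⟨t, ht⟩
      (fun x => hKt x x.2) (L.subgroupOf K')
    exact ⟨l, hl, fun x hx => h ⟨x, hL hx⟩ hx⟩
  intro H hH hfg
  obtain ⟨s, hs, hsx⟩ := hlift H hH
  have hGfg : Group.FG H := (Group.fg_iff_subgroup_fg H).2 hfg
  have hNn : (K.subgroupOf H).Normal := ⟨fun n hn x => hnorm x (hH x.2) n hn⟩
  have hPH : PolyGrowth H := hG.of_injective H.subtype H.subtype_injective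
  have hNfg : (K.subgroupOf H).FG := milnor_fg hPH (K.subgroupOf H) ⟨s, hs⟩ fun x => hsx x x.2
  have hKH : (K ⊓ H).FG := by
    rw [← Subgroup.subgroupOf_map_subtype]; exact fg_map _ hNfg
  obtain ⟨hsub, hvn⟩ := hK (K ⊓ H) inf_le_left hKH
  have hall : ∀ L ≤ H, L.FG := by
    intro L hL
    obtain ⟨l, hl, hlx⟩ := hlift L (hL.trans hH)
    have hLeq : L = (K ⊓ L) ⊔ Subgroup.zpowers l := by
      apply le_antisymm
      · intro x hx
        obtain ⟨i, hi⟩ := hlx x hx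
        have h2 : x = (x * l ^ i) * (l ^ i)⁻¹ := by group
        rw [h2]
        exact mul_mem (Subgroup.mem_sup_left ⟨hi, mul_mem hx (zpow_mem hl i)⟩)
          (Subgroup.mem_sup_right (inv_mem ⟨i, rfl⟩))
      · exact sup_le inf_le_right ((Subgroup.zpowers_le).2 hl)
    rw [hLeq]
    exact (hsub _ (inf_le_inf_left _ hL)).sup ⟨{l}, by simp [Subgroup.zpowers_eq_closure]⟩
  refine ⟨hall, virtuallyNilpotent_of_cyclic_extension hPH
    (fun L => fg_of_fg_map (hall _ (Subgroup.map_subtype_le L))) (K.subgroupOf H) ?_ ⟨s, hs⟩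
    fun x => hsx x x.2⟩
  have e := (K.subgroupOf H).equivMapOfInjective H.subtype H.subtype_injective
  rw [Subgroup.subgroupOf_map_subtype] at e
  exact hvn.of_mulEquiv e.symm

open commutatorElement in
/-- A finitely generated subgroup of a term of the derived series is reached from the next term by
adding its generators one at a time; every intermediate subgroup is normalised because it
contains the commutators. -/
lemma locallyVirtNil_derivedSeries {G : Type*} [Group G] (hG : PolyGrowth G) (n : ℕ)
    (hn : LocallyVirtNil (derivedSeries G (n + 1))) : LocallyVirtNil (derivedSeries G n) := by
  classical
  have hcomm : ∀ x ∈ derivedSeries G n, ∀ y ∈ derivedSeries G n, ⁅x, y⁆ ∈ derivedSeries G (n + 1) :=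
    fun x hx y hy => by
      rw [derivedSeries_succ]; exact Subgroup.commutator_mem_commutator hx hy
  have key : ∀ T : Finset G, (T : Set G) ⊆ derivedSeries G n →
      LocallyVirtNil (derivedSeries G (n + 1) ⊔ Subgroup.closure (T : Set G)) := by
    intro T
    induction T using Finset.induction_on with
    | empty => intro _; simpa using hn
    | insert t T _ ih =>
      intro hT
      have hT' : (T : Set G) ⊆ derivedSeries G n :=
        (Finset.coe_subset.2 (Finset.subset_insert t T)).trans hT
      have ht : t ∈ derivedSeries G n := hT (by simp)
      have hle : ∀ U : Set G, U ⊆ derivedSeries G n →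
          derivedSeries G (n + 1) ⊔ Subgroup.closure U ≤ derivedSeries G n := fun U hU =>
        sup_le (derivedSeries_antitone _ (Nat.le_succ n)) ((Subgroup.closure_le _).2 hU)
      set K := derivedSeries G (n + 1) ⊔ Subgroup.closure (T : Set G) with hK
      have hKn := hle _ hT'
      have hDK : derivedSeries G (n + 1) ≤ K := le_sup_left
      let D : Subgroup G :=
        { carrier := {x | x ∈ derivedSeries G n ∧ ∃ i : ℤ, x * t ^ i ∈ K}
          one_mem' := ⟨one_mem _, 0, by simp [one_mem]⟩
          mul_mem' := by
            rintro x y ⟨hx, i, hi⟩ ⟨hy, j, hj⟩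
            refine ⟨mul_mem hx hy, j + i, ?_⟩
            have h1 := hDK (hcomm x hx _ (hKn hj))
            convert mul_mem (mul_mem h1 hj) hi using 1
            rw [zpow_add, commutatorElement_def]; group
          inv_mem' := by
            rintro x ⟨hx, i, hi⟩
            refine ⟨inv_mem hx, -i, ?_⟩
            have h1 := hDK (hcomm (t ^ i) (zpow_mem ht i) x hx)
            convert inv_mem (mul_mem h1 hi) using 1
            rw [commutatorElement_def]; group }
      have hD : derivedSeries G (n + 1) ⊔ Subgroup.closure ((insert t T : Finset G) : Set G) ≤ D := by
        have hKD : K ≤ D := fun x hx => ⟨hKn hx, 0, by simpa using hx⟩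
        refine sup_le (hDK.trans hKD) ((Subgroup.closure_le _).2 ?_)
        rw [Finset.coe_insert]
        rintro x (rfl | hx)
        · exact ⟨ht, -1, by simp [one_mem]⟩
        · exact hKD (Subgroup.mem_sup_right (Subgroup.subset_closure hx))
      refine LocallyVirtNil.step hG (ih hT') (fun x hx k hk => ?_) t
        (Subgroup.mem_sup_right (Subgroup.subset_closure (by simp))) fun x hx => (hD hx).2
      have h1 := hDK (hcomm x (hle _ hT hx) k (hKn hk))
      convert mul_mem h1 hk using 1
      rw [commutatorElement_def]; group
  intro H hH hfg
  obtain ⟨T, hT⟩ := id hfg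
  have hT1 : (T : Set G) ⊆ derivedSeries G n := by
    rw [← Subgroup.closure_le, hT]; exact hH
  exact key T hT1 H (by rw [hT]; exact le_sup_right) hfg

lemma virtuallyNilpotent_of_solvable {G : Type*} [Group G] [hfg : Group.FG G] (hG : PolyGrowth G)
    (hs : Group.IsSolvable G) : VirtuallyNilpotent G := by
  obtain ⟨n, hn⟩ := hs.solvable
  have key : ∀ i, LocallyVirtNil (derivedSeries G (n - i)) := by
    intro i
    induction i with
    | zero =>
      rw [Nat.sub_zero, hn]
      intro H hH _
      rw [le_bot_iff] at hH
      subst hH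
      refine ⟨fun L hL => ?_, ⊤, inferInstance, inferInstance⟩
      rw [le_bot_iff.1 hL]
      exact ⟨∅, by simp⟩
    | succ i ih =>
      by_cases hi : n ≤ i
      · rwa [show n - (i + 1) = n - i by omega]
      · apply locallyVirtNil_derivedSeries hG
        rwa [show n - (i + 1) + 1 = n - i by omega]
  have h0 := key n
  rw [Nat.sub_self, derivedSeries_zero] at h0
  exact (h0 ⊤ le_rfl (Group.fg_def.1 hfg)).2.of_mulEquiv Subgroup.topEquiv

/-- The Milnor–Wolf theorem for virtually solvable groups. -/
theorem virtuallyNilpotent_of_polyGrowth {G : Type*} [Group G] [Group.FG G] (hG : PolyGrowth G)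
    (hs : VirtuallySolvable G) : VirtuallyNilpotent G := by
  obtain ⟨H, hH, hsol⟩ := hs
  have : Group.FG H := inferInstance
  exact VirtuallyNilpotent.of_finiteIndex H
    (virtuallyNilpotent_of_solvable (hG.of_injective H.subtype H.subtype_injective) hsol)

/-! ### Følner sets in virtually solvable groups -/

open Classical in
/-- Følner's condition for right translations by finite sets, one element at a time. -/
def Folner (G : Type*) [Group G] : Prop :=
  ∀ (S : Finset G) (ε : ℝ), 0 < ε → ∃ F : Finset G, F.Nonempty ∧
    ∀ s ∈ S, ((F.filter (fun x => x * s ∉ F)).card : ℝ) ≤ ε * F.card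

lemma Folner.of_finite {G : Type*} [Group G] [Finite G] : Folner G := by
  classical
  intro S ε hε
  have := Fintype.ofFinite G
  refine ⟨Finset.univ, Finset.univ_nonempty, fun s _ => ?_⟩
  simp
  positivity

/-- The products of the given elements with exponents at most `n` are polynomially many, so their
number cannot be multiplied by `1 + ε` at every step. -/
lemma Folner.of_comm {A : Type*} [CommGroup A] : Folner A := by
  classical
  intro S ε hε
  let φ : (S → ℕ) → A := fun e => ∏ s : S, (s : A) ^ e s
  let F : ℕ → Finset A := fun n => (Fintype.piFinset fun _ : S => Finset.range (n + 1)).image φ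
  have hcard : ∀ n, (F n).card ≤ (n + 1) ^ S.card := by
    intro n
    refine Finset.card_image_le.trans ?_
    simp
  have hne : ∀ n, (F n).Nonempty := fun n =>
    (Fintype.piFinset_nonempty.2 fun _ => ⟨0, by simp⟩).image φ
  have hmono : ∀ n, F n ⊆ F (n + 1) := fun n => Finset.image_subset_image
    (Fintype.piFinset_subset _ _ fun _ => Finset.range_subset_range.2 (by omega))
  have hmul : ∀ n, ∀ s ∈ S, ∀ x ∈ F n, x * s ∈ F (n + 1) := by
    intro n s hs x hx
    obtain ⟨e, he, rfl⟩ := Finset.mem_image.1 hx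
    rw [Fintype.mem_piFinset] at he
    refine Finset.mem_image.2 ⟨fun t => e t + if t = ⟨s, hs⟩ then 1 else 0, ?_, ?_⟩
    · rw [Fintype.mem_piFinset]
      intro t
      have := he t
      rw [Finset.mem_range] at this ⊢
      split_ifs <;> omega
    · simp only [φ, pow_add, Finset.prod_mul_distrib]
      congr 1
      rw [Finset.prod_eq_single (⟨s, hs⟩ : S)] <;> simp +contextual
  have hbad : ∀ n, ∀ s ∈ S, ((F n).filter (fun x => x * s ∉ F n)).card + (F n).card
      ≤ (F (n + 1)).card := by
    intro n s hs
    rw [← Finset.card_sdiff_add_card_eq_card (hmono n)]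
    refine Nat.add_le_add_right (Finset.card_le_card_of_injOn (· * s) ?_
      (mul_left_injective s).injOn) _
    intro x hx
    have hx' := Finset.mem_filter.1 hx
    exact Finset.mem_sdiff.2 ⟨hmul n s hs x hx'.1, hx'.2⟩
  by_cases hex : ∃ n, ((F (n + 1)).card : ℝ) ≤ (1 + ε) * (F n).card
  · obtain ⟨n, hn⟩ := hex
    refine ⟨F n, hne n, fun s hs => ?_⟩
    have : (((F n).filter (fun x => x * s ∉ F n)).card : ℝ) + (F n).card ≤ (F (n + 1)).card := by
      exact_mod_cast hbad n s hs
    linarith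
  · exfalso
    push Not at hex
    have hgrow : ∀ n, (1 + ε) ^ n ≤ ((F n).card : ℝ) := by
      intro n
      induction n with
      | zero => simpa using (hne 0)
      | succ n ih =>
        rw [pow_succ, mul_comm]
        exact (mul_le_mul_of_nonneg_left ih (by positivity)).trans (hex n).le
    have hall : ∀ n : ℕ, (1 + ε) ^ n ≤ ((n : ℝ) + 1) ^ S.card := fun n =>
      (hgrow n).trans (by exact_mod_cast hcard n)
    have hlim := (tendsto_pow_const_div_const_pow_of_one_lt S.card
      (show 1 < 1 + ε by linarith)).comp (Filter.tendsto_add_atTop_nat 1)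
    have hlim2 := hlim.const_mul (1 + ε)
    rw [mul_zero] at hlim2
    obtain ⟨m, hm⟩ := (hlim2.eventually (gt_mem_nhds one_pos)).exists
    have h2 := hall m
    simp only [Function.comp_apply, Nat.cast_add, Nat.cast_one, pow_succ (1 + ε)] at hm
    rw [← mul_div_assoc, div_lt_one (by positivity)] at hm
    nlinarith

open Classical in
lemma card_filter_product_le {α β : Type*} (A : Finset α) (B : Finset β) (P : α → β → Prop) (r : ℝ)
    (h : ∀ q ∈ B, ((A.filter (fun a => P a q)).card : ℝ) ≤ r) :
    (((A ×ˢ B).filter (fun p => P p.1 p.2)).card : ℝ) ≤ B.card * r := by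
  have h1 : ((A ×ˢ B).filter (fun p => P p.1 p.2)).card
      = ∑ q ∈ B, (A.filter (fun a => P a q)).card := by
    rw [Finset.card_filter, Finset.sum_product_right]
    refine Finset.sum_congr rfl fun q _ => ?_
    rw [Finset.card_filter]
  rw [h1]
  push_cast
  exact (Finset.sum_le_card_nsmul _ _ r h).trans (by rw [nsmul_eq_mul])

/-- A Følner set of the extension is obtained from one of the quotient, lifted by a section `σ`, and
one of `N` that is almost invariant under the finitely many values of the cocycle of `σ`. -/
lemma Folner.extension {G : Type*} [Group G] (N : Subgroup G) [N.Normal] (hN : Folner N)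
    (hQ : Folner (G ⧸ N)) : Folner G := by
  classical
  intro S ε hε
  obtain ⟨FQ, hFQ, hbQ⟩ := hQ (S.image (QuotientGroup.mk : G → G ⧸ N)) (ε / 2) (by positivity)
  let σ : G ⧸ N → G := Quotient.out
  have hσ : ∀ q, (QuotientGroup.mk (σ q) : G ⧸ N) = q := fun q => Quotient.out_eq q
  have hc : ∀ (q : G ⧸ N) (s : G), σ q * s * (σ (q * s))⁻¹ ∈ N := by
    intro q s
    rw [← QuotientGroup.eq_one_iff, QuotientGroup.mk_mul, QuotientGroup.mk_mul,
      QuotientGroup.mk_inv, hσ, hσ]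
    simp
  let c : G ⧸ N → G → N := fun q s => ⟨_, hc q s⟩
  obtain ⟨FN, hFN, hbN⟩ := hN ((FQ ×ˢ S).image fun p => c p.1 p.2) (ε / 2) (by positivity)
  let φ : N × (G ⧸ N) → G := fun p => p.1 * σ p.2
  have hφ : Function.Injective φ := by
    rintro ⟨n, q⟩ ⟨n', q'⟩ h
    have hq : q = q' := by
      have := congrArg (QuotientGroup.mk : G → G ⧸ N) h
      simp only [φ, QuotientGroup.mk_mul, hσ, (QuotientGroup.eq_one_iff (n : G)).2 n.2,
        (QuotientGroup.eq_one_iff (n' : G)).2 n'.2, one_mul] at this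
      exact this
    subst hq
    have := mul_right_cancel h
    simpa using this
  refine ⟨(FN ×ˢ FQ).image φ, (hFN.product hFQ).image φ, fun s hs => ?_⟩
  have hsub : ((FN ×ˢ FQ).image φ).filter (fun x => x * s ∉ (FN ×ˢ FQ).image φ) ⊆
      ((FN ×ˢ FQ.filter (fun q => q * (s : G ⧸ N) ∉ FQ)) ∪
        (FN ×ˢ FQ).filter (fun p => p.1 * c p.2 s ∉ FN)).image φ := by
    intro x hx
    obtain ⟨hx1, hx2⟩ := Finset.mem_filter.1 hx
    obtain ⟨⟨n, q⟩, hnq, rfl⟩ := Finset.mem_image.1 hx1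
    obtain ⟨hn, hq⟩ := Finset.mem_product.1 hnq
    refine Finset.mem_image_of_mem φ ?_
    by_contra hcon
    simp only [Finset.mem_union, Finset.mem_product, Finset.mem_filter, not_or, not_and,
      not_not] at hcon
    have h1 := hcon.1 hn hq
    have h2 := hcon.2 ⟨hn, hq⟩
    apply hx2
    refine Finset.mem_image.2 ⟨(n * c q s, q * s), Finset.mem_product.2 ⟨h2, h1⟩, ?_⟩
    simp only [φ, c, Subgroup.coe_mul]
    group
  have hcard := (Finset.card_le_card hsub).trans
    (Finset.card_image_le.trans (Finset.card_union_le _ _))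
  have hA : ((FN ×ˢ FQ.filter (fun q => q * (s : G ⧸ N) ∉ FQ)).card : ℝ)
      ≤ FN.card * (ε / 2 * FQ.card) := by
    have h1 : ((FQ.filter (fun q => q * (s : G ⧸ N) ∉ FQ)).card : ℝ) ≤ ε / 2 * FQ.card := by
      have h2 := hbQ _ (Finset.mem_image_of_mem _ hs)
      convert h2
    rw [Finset.card_product, Nat.cast_mul]
    exact mul_le_mul_of_nonneg_left h1 (Nat.cast_nonneg _)
  have hB : (((FN ×ˢ FQ).filter (fun p => p.1 * c p.2 s ∉ FN)).card : ℝ)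
      ≤ FQ.card * (ε / 2 * FN.card) := by
    have h1 := card_filter_product_le FN FQ (fun n q => n * c q s ∉ FN) (ε / 2 * FN.card)
      fun q hq => by
        have h2 := hbN _ (Finset.mem_image.2 ⟨(q, s), Finset.mem_product.2 ⟨hq, hs⟩, rfl⟩)
        convert h2
    convert h1
  rw [Finset.card_image_of_injective _ hφ, Finset.card_product]
  have h3 := (Nat.cast_le (α := ℝ)).2 hcard
  push_cast at h3 ⊢
  linarith

open commutatorElement in
lemma Folner.of_derivedSeries (n : ℕ) : ∀ (G : Type*) [Group G], derivedSeries G n = ⊥ →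
    Folner G := by
  induction n with
  | zero =>
    intro G _ h
    have : Subsingleton G := by
      rw [derivedSeries_zero] at h
      exact Subgroup.subsingleton_iff.1 (subsingleton_of_top_le_bot h.le)
    exact Folner.of_finite
  | succ n ih =>
    intro G _ h
    refine Folner.extension (derivedSeries G n) ?_ (ih _ ?_)
    · let _ : CommGroup (derivedSeries G n) := { (inferInstance : Group (derivedSeries G n)) with
        mul_comm := fun a b => Subtype.ext (by
          have h1 : ⁅(a : G), (b : G)⁆ ∈ derivedSeries G (n + 1) := by
            rw [derivedSeries_succ]; exact Subgroup.commutator_mem_commutator a.2 b.2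
          rw [h, Subgroup.mem_bot, commutatorElement_eq_one_iff_mul_comm] at h1
          exact h1) }
      exact Folner.of_comm
    · rw [← map_derivedSeries_eq (QuotientGroup.mk'_surjective _), eq_bot_iff,
        Subgroup.map_le_iff_le_comap, MonoidHom.comap_bot, QuotientGroup.ker_mk']

lemma Folner.of_virtuallySolvable {G : Type*} [Group G] (hG : VirtuallySolvable G) : Folner G := by
  obtain ⟨H, hH, hs⟩ := hG
  have hs' : Group.IsSolvable H := hs
  have h1 : Group.IsSolvable H.normalCore :=
    Group.isSolvable_of_isSolvable_injective (f := Subgroup.inclusion H.normalCore_le)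
      (Subgroup.inclusion_injective _)
  obtain ⟨n, hn⟩ := h1.solvable
  exact Folner.extension H.normalCore (Folner.of_derivedSeries n _ hn) Folner.of_finite

/-! ### Hyperbolic graphs and visual metrics -/

section Geometry

variable {W : Type*} {Y : SimpleGraph W}

lemma dist_add_dist_of_mem_geodesic (hY : Y.Connected) {a b u : W} (γ : Y.Walk a b)
    (hγ : γ.IsGeodesic) (hu : u ∈ γ.support) : Y.dist a u + Y.dist u b = Y.dist a b := by
  classical
  apply le_antisymm _ hY.dist_triangle
  have h1 := congrArg Walk.length (γ.take_spec hu)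
  rw [Walk.length_append] at h1
  have h2 := dist_le (γ.takeUntil u hu)
  have h3 := dist_le (γ.dropUntil u hu)
  have h4 : γ.length = Y.dist a b := hγ
  omega

lemma exists_geodesic (hY : Y.Connected) (a b : W) : ∃ γ : Y.Walk a b, γ.IsGeodesic :=
  hY.exists_walk_length_eq_dist a b

lemma exists_point_on_geodesic (hY : Y.Connected) (a b : W) (r : ℕ) (hr : r ≤ Y.dist a b) :
    ∃ p, Y.dist a p = r ∧ r + Y.dist p b = Y.dist a b := by
  obtain ⟨γ, hγ⟩ := exists_geodesic hY a b
  have hγ' : γ.length = Y.dist a b := hγ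
  have h1 := dist_le (γ.take r)
  have h2 := dist_le (γ.drop r)
  have h3 := dist_add_dist_of_mem_geodesic hY γ hγ (γ.getVert_mem_support r)
  rw [Walk.take_length] at h1
  rw [Walk.drop_length] at h2
  refine ⟨γ.getVert r, ?_, ?_⟩ <;> omega

/-- Thinness of triangles in terms of the metric only, with an integral constant. -/
def SlimGeodesics (Y : SimpleGraph W) (D : ℕ) : Prop :=
  ∀ (a b c : W) (γ : Y.Walk a b), γ.IsGeodesic → ∀ u ∈ γ.support, ∃ v, Y.dist u v ≤ D ∧
    (Y.dist b v + Y.dist v c = Y.dist b c ∨ Y.dist a v + Y.dist v c = Y.dist a c)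

lemma GraphHyperbolic.slim (hY : Y.Connected) {δ : ℝ} (h : GraphHyperbolic Y δ) :
    ∃ D, SlimGeodesics Y D := by
  refine ⟨⌈δ⌉₊, fun a b c γ hγ u hu => ?_⟩
  obtain ⟨γ₂, h2⟩ := exists_geodesic hY b c
  obtain ⟨γ₃, h3⟩ := exists_geodesic hY c a
  obtain ⟨v, hv, hd⟩ := h γ γ₂ γ₃ hγ h2 h3 u hu
  refine ⟨v, by exact_mod_cast hd.trans (Nat.le_ceil δ), ?_⟩
  rcases hv with hv | hv
  · exact Or.inl (dist_add_dist_of_mem_geodesic hY γ₂ h2 hv)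
  · right
    have := dist_add_dist_of_mem_geodesic hY γ₃ h3 hv
    rw [Y.dist_comm (u := a) (v := v), Y.dist_comm (u := v) (v := c),
      Y.dist_comm (u := a) (v := c)]
    omega

/-- Twice the Gromov product of `x` and `y` based at `o`. By the triangle inequality the
subtraction is never truncated in a connected graph. -/
noncomputable def gromov (Y : SimpleGraph W) (o x y : W) : ℕ := Y.dist o x + Y.dist o y - Y.dist x y

lemma gromov_add (hY : Y.Connected) (o x y : W) :
    gromov Y o x y + Y.dist x y = Y.dist o x + Y.dist o y := by
  have h := hY.dist_triangle (u := x) (v := o) (w := y)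
  rw [Y.dist_comm (u := x) (v := o)] at h
  unfold gromov
  omega

lemma gromov_comm (o x y : W) : gromov Y o x y = gromov Y o y x := by
  unfold gromov
  rw [Y.dist_comm (u := x) (v := y)]
  omega

lemma gromov_le_of_between (hY : Y.Connected) (o x y w : W)
    (h : Y.dist x w + Y.dist w y = Y.dist x y) : gromov Y o x y ≤ 2 * Y.dist o w := by
  have h1 := gromov_add hY o x y
  have h2 := hY.dist_triangle (u := o) (v := w) (w := x)
  have h3 := hY.dist_triangle (u := o) (v := w) (w := y)
  rw [Y.dist_comm (u := w) (v := x)] at h2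
  omega

/-- Every geodesic comes as close to the base point as the Gromov product of its ends allows. -/
lemma exists_near_base (hY : Y.Connected) {D : ℕ} (hD : SlimGeodesics Y D) (o x z : W)
    (γ : Y.Walk x z) (hγ : γ.IsGeodesic) :
    ∃ w ∈ γ.support, 2 * Y.dist o w ≤ gromov Y o x z + 4 * D + 2 := by
  -- `P` and `Q`: being close to a geodesic from `o` to `x`, respectively to `z`; along `γ` one
  -- passes from `P` to `Q` somewhere
  let P : W → Prop := fun w => ∃ p, Y.dist w p ≤ D ∧ Y.dist o p + Y.dist p x = Y.dist o x
  let Q : W → Prop := fun w => ∃ p, Y.dist w p ≤ D ∧ Y.dist o p + Y.dist p z = Y.dist o z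
  have hPQ : ∀ w ∈ γ.support, P w ∨ Q w := by
    intro w hw
    obtain ⟨v, hv, h | h⟩ := hD x z o γ hγ w hw
    · right
      refine ⟨v, hv, ?_⟩
      rw [Y.dist_comm (u := o) (v := v), Y.dist_comm (u := v) (v := z),
        Y.dist_comm (u := o) (v := z)]; omega
    · left
      refine ⟨v, hv, ?_⟩
      rw [Y.dist_comm (u := o) (v := v), Y.dist_comm (u := v) (v := x),
        Y.dist_comm (u := o) (v := x)]; omega
  have hex : ∃ w ∈ γ.support, ∃ w' ∈ γ.support, Y.dist w w' ≤ 1 ∧ P w ∧ Q w' := by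
    by_contra! hcon
    have hall : ∀ i ≤ γ.length, P (γ.getVert i) := by
      intro i
      induction i with
      | zero => intro _; rw [Walk.getVert_zero]; exact ⟨x, by simp, by simp⟩
      | succ i ih =>
        intro hi
        have h1 := ih (by omega)
        by_contra h2
        refine hcon _ (γ.getVert_mem_support i) _ (γ.getVert_mem_support (i + 1)) ?_ h1
          ((hPQ _ (γ.getVert_mem_support (i + 1))).resolve_left h2)
        exact (SimpleGraph.dist_eq_one_iff_adj.2 (γ.adj_getVert_succ (by omega))).le
    have h1 := hall γ.length le_rfl
    rw [Walk.getVert_length] at h1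
    exact hcon z γ.end_mem_support z γ.end_mem_support (by simp) h1 ⟨z, by simp, by simp⟩
  obtain ⟨w, hw, w', hw', hww, ⟨p, hp, hp2⟩, ⟨q, hq, hq2⟩⟩ := hex
  refine ⟨w, hw, ?_⟩
  have e1 := gromov_add hY o x z
  have e2 := hY.dist_triangle (u := o) (v := p) (w := w)
  have e3 := hY.dist_triangle (u := x) (v := p) (w := w)
  have e4 := hY.dist_triangle (u := o) (v := q) (w := w')
  have e5 := hY.dist_triangle (u := z) (v := q) (w := w')
  have e6 := hY.dist_triangle (u := x) (v := w) (w := w')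
  have e7 := hY.dist_triangle (u := x) (v := w') (w := z)
  have e8 := hY.dist_triangle (u := o) (v := w') (w := w)
  rw [Y.dist_comm (u := w') (v := w)] at e8
  rw [Y.dist_comm (u := p) (v := w)] at e2 e3
  rw [Y.dist_comm (u := q) (v := w')] at e4 e5
  rw [Y.dist_comm (u := x) (v := p)] at e3
  rw [Y.dist_comm (u := z) (v := q)] at e5
  rw [Y.dist_comm (u := z) (v := w')] at e5
  omega

/-- The four-point inequality: the Gromov product is an ultrametric up to an additive constant. -/
lemma gromov_min_le (hY : Y.Connected) {D : ℕ} (hD : SlimGeodesics Y D) (o x y z : W) :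
    min (gromov Y o x y) (gromov Y o y z) ≤ gromov Y o x z + (6 * D + 2) := by
  obtain ⟨γ, hγ⟩ := exists_geodesic hY x z
  obtain ⟨w, hw, h⟩ := exists_near_base hY hD o x z γ hγ
  obtain ⟨v, hv, h1 | h1⟩ := hD x z y γ hγ w hw
  · have h2 := gromov_le_of_between hY o z y v h1
    have h3 := hY.dist_triangle (u := o) (v := w) (w := v)
    rw [gromov_comm] at h2
    omega
  · have h2 := gromov_le_of_between hY o x y v h1
    have h3 := hY.dist_triangle (u := o) (v := w) (w := v)
    omega

/-- Frink's metrization of the visual quasi-metric `μ ^ gromov` seen from `o`: for `μ` close to `1`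
it is comparable to a pseudometric, uniformly in `o`. -/
lemma exists_visual (Δ : ℕ) (hΔ : ∀ o x y z : W,
    min (gromov Y o x y) (gromov Y o y z) ≤ gromov Y o x z + Δ) :
    ∃ μ : ℝ, 0 < μ ∧ μ < 1 ∧ ∀ o : W, ∃ v : W → W → ℝ, (∀ x, v x x = 0) ∧ (∀ x y, 0 ≤ v x y) ∧
      (∀ x y, v x y = v y x) ∧ (∀ x y z, v x z ≤ v x y + v y z) ∧
      (∀ x y, v x y ≤ μ ^ gromov Y o x y) ∧
      (∀ x y, x ≠ y → μ ^ gromov Y o x y ≤ 2 * v x y) := by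
  classical
  -- chosen so that `μ ^ (2 * Δ) ≥ 1 / 2` by Bernoulli's inequality
  let μ : ℝ := 1 - 1 / (4 * Δ + 4)
  have hfrac : (1 : ℝ) / (4 * Δ + 4) ≤ 1 / 4 :=
    one_div_le_one_div_of_le (by norm_num) (by linarith [Nat.cast_nonneg (α := ℝ) Δ])
  have hfrac0 : (0 : ℝ) < 1 / (4 * Δ + 4) := by positivity
  have hμ0 : 0 < μ := by simp only [μ]; linarith
  have hμ1 : μ < 1 := by simp only [μ]; linarith
  have hμΔ : 1 ≤ 2 * (μ ^ Δ * μ ^ Δ) := by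
    have hb := one_add_mul_le_pow (show (-2 : ℝ) ≤ -(1 / (4 * Δ + 4)) by linarith) (Δ + Δ)
    rw [← sub_eq_add_neg] at hb
    rw [← pow_add]
    have : ((Δ + Δ : ℕ) : ℝ) * (1 / (4 * Δ + 4)) ≤ 1 / 2 := by
      push_cast
      rw [mul_one_div, div_le_div_iff₀ (by positivity) (by norm_num)]
      linarith
    change _ ≤ μ ^ (Δ + Δ) at hb
    linarith
  refine ⟨μ, hμ0, hμ1, fun o => ?_⟩
  let d : W → W → NNReal := fun x y => if x = y then 0 else ⟨μ ^ gromov Y o x y, by positivity⟩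
  have hdself : ∀ x, d x x = 0 := fun x => if_pos rfl
  have hdne : ∀ x y, x ≠ y → ((d x y : NNReal) : ℝ) = μ ^ gromov Y o x y := fun x y h => by
    exact congrArg NNReal.toReal (if_neg h)
  have hdcomm : ∀ x y, d x y = d y x := fun x y => by
    simp only [d, gromov_comm (Y := Y) o x y, eq_comm (a := x) (b := y)]
  -- one step loses the factor `μ ^ (-Δ)`, two steps lose at most `2`
  have hstep : ∀ x y z, μ ^ Δ * (d x z : ℝ) ≤ max (d x y : ℝ) (d y z) := by
    intro x y z
    have hpow : μ ^ Δ ≤ 1 := pow_le_one₀ hμ0.le hμ1.le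
    by_cases hxz : x = z
    · subst hxz; rw [hdself]; simp
    by_cases hxy : x = y
    · subst hxy
      exact le_max_of_le_right (mul_le_of_le_one_left (d x z).2 hpow)
    by_cases hyz : y = z
    · subst hyz
      exact le_max_of_le_left (mul_le_of_le_one_left (d x y).2 hpow)
    rw [hdne _ _ hxz, hdne _ _ hxy, hdne _ _ hyz, ← pow_add, le_max_iff]
    rcases min_le_iff.1 (hΔ o x y z) with h | h
    · exact Or.inl (pow_le_pow_of_le_one hμ0.le hμ1.le (by omega))
    · exact Or.inr (pow_le_pow_of_le_one hμ0.le hμ1.le (by omega))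
  have hd4 : ∀ x₁ x₂ x₃ x₄, d x₁ x₄ ≤ 2 * max (d x₁ x₂) (max (d x₂ x₃) (d x₃ x₄)) := by
    intro x₁ x₂ x₃ x₄
    rw [← NNReal.coe_le_coe]
    push_cast
    have h1 := hstep x₁ x₂ x₄
    have h2 := hstep x₂ x₃ x₄
    set c := μ ^ Δ
    have hc0 : 0 < c := by positivity
    have hc1 : c ≤ 1 := pow_le_one₀ hμ0.le hμ1.le
    set m := max (d x₁ x₂ : ℝ) (max (d x₂ x₃ : ℝ) (d x₃ x₄))
    have hm1 : (d x₁ x₂ : ℝ) ≤ m := le_max_left _ _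
    have hm2 : max (d x₂ x₃ : ℝ) (d x₃ x₄) ≤ m := le_max_right _ _
    have hm0 : 0 ≤ m := (d x₁ x₂).2.trans hm1
    have h3 : c * (c * (d x₁ x₄ : ℝ)) ≤ m := by
      rcases le_max_iff.1 h1 with h | h
      · nlinarith
      · nlinarith
    nlinarith [(d x₁ x₄).2]
  let _ : PseudoMetricSpace W := PseudoMetricSpace.ofPreNNDist d hdself hdcomm
  refine ⟨fun x y => dist x y, dist_self, fun x y => dist_nonneg, dist_comm, dist_triangle,
    fun x y => ?_, fun x y hxy => ?_⟩
  · refine (PseudoMetricSpace.dist_ofPreNNDist_le d hdself hdcomm x y).trans ?_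
    by_cases h : x = y
    · subst h; rw [hdself]; exact (by positivity)
    · rw [hdne _ _ h]
  · rw [← hdne _ _ hxy]
    exact PseudoMetricSpace.le_two_mul_dist_ofPreNNDist d hdself hdcomm hd4 x y

lemma exists_ball_cover (hY : Y.Connected) {b : ℕ} (hb : ∀ v, (Y.neighborSet v).encard ≤ b)
    (o : W) (r : ℕ) : ∃ U : Finset W, (∀ w, Y.dist o w ≤ r → w ∈ U) ∧ U.card ≤ (b + 1) ^ r := by
  classical
  induction r with
  | zero =>
    refine ⟨{o}, fun w hw => ?_, by simp⟩
    rw [Finset.mem_singleton]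
    exact ((hY.dist_eq_zero_iff).1 (Nat.le_zero.1 hw)).symm
  | succ r ih =>
    obtain ⟨U, hU, hc⟩ := ih
    have hfin : ∀ v, (Y.neighborSet v).Finite := fun v =>
      Set.finite_of_encard_le_coe (hb v)
    have hcard : ∀ v, (hfin v).toFinset.card ≤ b := fun v => by
      have := hb v
      rw [(hfin v).encard_eq_coe_toFinset_card] at this
      exact_mod_cast this
    refine ⟨U.biUnion fun v => insert v (hfin v).toFinset, fun w hw => ?_, ?_⟩
    · rw [Finset.mem_biUnion]
      by_cases h : Y.dist o w ≤ r
      · exact ⟨w, hU w h, Finset.mem_insert_self _ _⟩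
      · obtain ⟨p, hp1, hp2⟩ := exists_point_on_geodesic hY o w r (by omega)
        refine ⟨p, hU p hp1.le, Finset.mem_insert_of_mem ?_⟩
        rw [Set.Finite.mem_toFinset, mem_neighborSet, ← dist_eq_one_iff_adj]
        omega
    · rw [pow_succ]
      refine Finset.card_biUnion_le.trans ((Finset.sum_le_card_nsmul _ _ (b + 1) fun v _ => ?_).trans ?_)
      · exact (Finset.card_insert_le _ _).trans (Nat.succ_le_succ (hcard v))
      · rw [smul_eq_mul]; exact Nat.mul_le_mul_right _ hc

end Geometry

/-! ### Cutting finite sets in hyperbolic graphs -/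

section Cut

/-- Discrete coarea inequality: some level between `τ₁` and `τ₂` is crossed upwards by at most
the average number of the segments `[a i, b i]`. -/
lemma exists_level {ι : Type*} (E : Finset ι) (a b : ι → ℝ) {τ₁ τ₂ : ℝ} (hτ : τ₁ < τ₂) :
    ∃ t, τ₁ ≤ t ∧ t < τ₂ ∧
      (τ₂ - τ₁) * ((E.filter fun i => a i ≤ t ∧ t < b i).card : ℝ) ≤ ∑ i ∈ E, |b i - a i| := by
  classical
  let F : ℝ → ℝ := fun t => ∑ i ∈ E, (Set.Ico (a i) (b i)).indicator (fun _ => (1 : ℝ)) t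
  have hint : ∀ i ∈ E, MeasureTheory.IntegrableOn
      ((Set.Ico (a i) (b i)).indicator (fun _ => (1 : ℝ))) (Set.Ico τ₁ τ₂) := fun i _ =>
    MeasureTheory.Integrable.indicator (MeasureTheory.integrable_const _) measurableSet_Ico
  have hvol : MeasureTheory.volume (Set.Ico τ₁ τ₂) ≠ 0 := by
    rw [Real.volume_Ico]; simpa using hτ
  have hvol' : MeasureTheory.volume (Set.Ico τ₁ τ₂) ≠ ⊤ := by
    rw [Real.volume_Ico]; exact ENNReal.ofReal_ne_top
  have hF : MeasureTheory.IntegrableOn F (Set.Ico τ₁ τ₂) :=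
    MeasureTheory.integrable_finsetSum _ hint
  obtain ⟨t, ht, hle⟩ := MeasureTheory.exists_le_setAverage hvol hvol' hF
  refine ⟨t, ht.1, ht.2, ?_⟩
  have hFt : F t = ((E.filter fun i => a i ≤ t ∧ t < b i).card : ℝ) := by
    simp only [F, Set.indicator_apply, Set.mem_Ico]
    rw [Finset.sum_boole]
  rw [← hFt]
  rw [MeasureTheory.setAverage_eq, smul_eq_mul, Real.volume_real_Ico_of_le hτ.le] at hle
  have hpos : 0 < τ₂ - τ₁ := by linarith
  rw [inv_mul_eq_div, le_div_iff₀ hpos, mul_comm] at hle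
  refine hle.trans ?_
  simp only [F]
  rw [MeasureTheory.integral_finsetSum _ hint]
  refine Finset.sum_le_sum fun i _ => ?_
  rw [MeasureTheory.integral_indicator measurableSet_Ico,
    MeasureTheory.setIntegral_const, smul_eq_mul, mul_one,
    MeasureTheory.measureReal_restrict_apply measurableSet_Ico]
  calc MeasureTheory.volume.real (Set.Ico (a i) (b i) ∩ Set.Ico τ₁ τ₂)
      ≤ MeasureTheory.volume.real (Set.Ico (a i) (b i)) :=
        MeasureTheory.measureReal_mono Set.inter_subset_left
          (by rw [Real.volume_Ico]; exact ENNReal.ofReal_ne_top)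
    _ = max (b i - a i) 0 := Real.volume_real_Ico
    _ ≤ |b i - a i| := max_le (le_abs_self _) (abs_nonneg _)

/-- Balancing the growth `B ^ r` of balls against the decay `ν ^ r`. -/
lemma exists_balance {ν : ℝ} (hν0 : 0 < ν) (hν1 : ν < 1) (M b : ℕ) :
    ∃ η C : ℝ, 0 < η ∧ 0 ≤ C ∧ ∀ n : ℕ, 0 < n →
      ∃ r : ℕ, (M : ℝ) * (b + 1 : ℝ) ^ r + n * ν ^ r ≤ C * (n : ℝ) ^ (1 - η) := by
  obtain ⟨B, hB⟩ : ∃ B : ℝ, B = b + 2 + ν⁻¹ := ⟨_, rfl⟩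
  have hb0 : (0 : ℝ) ≤ b := Nat.cast_nonneg b
  have hi : 0 < ν⁻¹ := by positivity
  have hB1 : 1 < B := by linarith
  have hB2 : ν⁻¹ ≤ B := by linarith
  have hlB : 0 < Real.log B := Real.log_pos hB1
  have hlν : Real.log ν < 0 := Real.log_neg hν0 hν1
  have hlνB : -Real.log ν ≤ Real.log B := by
    rw [← Real.log_inv]; exact Real.log_le_log hi hB2
  refine ⟨-Real.log ν / (2 * Real.log B), M + ν⁻¹, by
    apply div_pos <;> linarith, by positivity, fun n hn => ?_⟩
  have hη : -Real.log ν / (2 * Real.log B) ≤ 1 / 2 := by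
    rw [div_le_div_iff₀ (by positivity) (by norm_num)]; linarith
  have hn1 : (1 : ℝ) ≤ n := by exact_mod_cast hn
  have hn0 : (0 : ℝ) < n := by linarith
  have hln : 0 ≤ Real.log n := Real.log_nonneg hn1
  let q : ℝ := Real.log n / (2 * Real.log B)
  have hq : 0 ≤ q := by positivity
  refine ⟨⌊q⌋₊, ?_⟩
  have h1 : (b + 1 : ℝ) ^ ⌊q⌋₊ ≤ (n : ℝ) ^ (1 - -Real.log ν / (2 * Real.log B)) := by
    calc (b + 1 : ℝ) ^ ⌊q⌋₊ ≤ B ^ ⌊q⌋₊ := pow_le_pow_left₀ (by positivity) (by linarith) _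
      _ = B ^ (⌊q⌋₊ : ℝ) := (Real.rpow_natCast _ _).symm
      _ ≤ B ^ q := Real.rpow_le_rpow_of_exponent_le hB1.le (Nat.floor_le hq)
      _ = (n : ℝ) ^ (1 / 2 : ℝ) := by
        rw [Real.rpow_def_of_pos (by linarith), Real.rpow_def_of_pos hn0]
        congr 1
        simp only [q]; field_simp
      _ ≤ _ := Real.rpow_le_rpow_of_exponent_le hn1 (by linarith)
  have h2 : ν ^ ⌊q⌋₊ ≤ ν⁻¹ * (n : ℝ) ^ (-(-Real.log ν / (2 * Real.log B))) := by
    calc ν ^ ⌊q⌋₊ = ν ^ (⌊q⌋₊ : ℝ) := (Real.rpow_natCast _ _).symm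
      _ ≤ ν ^ (-1 + q) := Real.rpow_le_rpow_of_exponent_ge hν0 hν1.le
          (by linarith [Nat.lt_floor_add_one q])
      _ = ν⁻¹ * ν ^ q := by rw [Real.rpow_add hν0, Real.rpow_neg_one]
      _ = _ := by
        congr 1
        rw [Real.rpow_def_of_pos hν0, Real.rpow_def_of_pos hn0]
        congr 1
        simp only [q]; field_simp
  have h3 : (n : ℝ) ^ (1 - -Real.log ν / (2 * Real.log B))
      = n * (n : ℝ) ^ (-(-Real.log ν / (2 * Real.log B))) := by
    rw [sub_eq_add_neg, Real.rpow_add hn0, Real.rpow_one]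
  rw [add_mul]
  refine add_le_add (mul_le_mul_of_nonneg_left h1 (Nat.cast_nonneg M)) ?_
  rw [h3]
  calc n * ν ^ ⌊q⌋₊ ≤ n * (ν⁻¹ * (n : ℝ) ^ (-(-Real.log ν / (2 * Real.log B)))) :=
        mul_le_mul_of_nonneg_left h2 hn0.le
    _ = _ := by ring

variable {W : Type*} {Y : SimpleGraph W} {α : Type*}

lemma exists_median [Nonempty W] (Y : SimpleGraph W) (Γ : Finset α) (f : α → W) :
    ∃ o, ∀ p, ∑ x ∈ Γ, Y.dist o (f x) ≤ ∑ x ∈ Γ, Y.dist p (f x) :=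
  ⟨Function.argmin (fun p => ∑ x ∈ Γ, Y.dist p (f x)),
    fun p => Function.argmin_le (fun p => ∑ x ∈ Γ, Y.dist p (f x)) p⟩

/-- Seen from a median, no direction attracts more than four sevenths of the points:
otherwise moving the median in that direction would decrease the sum of distances. -/
lemma median_spread (hY : Y.Connected) {Δ : ℕ} (hΔ0 : 0 < Δ)
    (hΔ : ∀ o x y z : W, min (gromov Y o x y) (gromov Y o y z) ≤ gromov Y o x z + Δ)
    (Γ : Finset α) (f : α → W) (o : W)
    (ho : ∀ p, ∑ x ∈ Γ, Y.dist o (f x) ≤ ∑ x ∈ Γ, Y.dist p (f x)) (z : W) :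
    7 * (Γ.filter fun x => 8 * Δ ≤ gromov Y o (f x) z).card ≤ 4 * Γ.card := by
  by_cases hz : Y.dist o z < 4 * Δ
  · rw [Finset.filter_eq_empty_iff.2, Finset.card_empty]
    · omega
    · intro x _ h
      have h1 := gromov_add hY o (f x) z
      have h2 := hY.dist_triangle (u := o) (v := z) (w := f x)
      rw [Y.dist_comm (u := z)] at h2
      omega
  obtain ⟨p, hp1, hp2⟩ := exists_point_on_geodesic hY o z (4 * Δ) (by omega)
  have key : ∀ x ∈ Γ, Y.dist p (f x) + (if 8 * Δ ≤ gromov Y o (f x) z then 7 * Δ else 0)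
      ≤ Y.dist o (f x) + 4 * Δ := by
    intro x _
    have e1 := gromov_add hY o (f x) p
    rw [Y.dist_comm (u := f x) (v := p)] at e1
    split_ifs with h
    · have e2 := hΔ o (f x) z p
      have e3 := gromov_add hY o z p
      rw [Y.dist_comm (u := z) (v := p)] at e3
      omega
    · have e2 := hY.dist_triangle (u := p) (v := o) (w := f x)
      rw [Y.dist_comm (u := p) (v := o)] at e2
      omega
  have hsum := Finset.sum_le_sum key
  rw [Finset.sum_add_distrib, Finset.sum_add_distrib, ← Finset.sum_filter, Finset.sum_const,
    Finset.sum_const, smul_eq_mul, smul_eq_mul] at hsum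
  have := ho p
  have h3 : (Γ.filter fun x => 8 * Δ ≤ gromov Y o (f x) z).card * (7 * Δ)
      ≤ Γ.card * (4 * Δ) := by omega
  nlinarith

/-- A definite proportion of the points lies in one direction, up to any fixed precision. -/
lemma exists_cluster (hY : Y.Connected) {b : ℕ} (hb : ∀ v, (Y.neighborSet v).encard ≤ b) {Δ : ℕ}
    (hΔ : ∀ o x y z : W, min (gromov Y o x y) (gromov Y o y z) ≤ gromov Y o x z + Δ)
    (Γ : Finset α) (f : α → W) (o : W) (R : ℕ) :
    ∃ A ⊆ Γ, Γ.card ≤ (b + 1) ^ R * A.card ∧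
      ∀ x ∈ A, ∀ z ∈ A, f x = f z ∨ 2 * R ≤ gromov Y o (f x) (f z) + Δ := by
  classical
  have hp : ∀ w : W, ∃ p, Y.dist o p = min R (Y.dist o w) ∧
      Y.dist o p + Y.dist p w = Y.dist o w := by
    intro w
    obtain ⟨p, h1, h2⟩ := exists_point_on_geodesic hY o w (min R (Y.dist o w)) (min_le_right _ _)
    exact ⟨p, h1, by rw [h1]; exact h2⟩
  choose p hp1 hp2 using hp
  obtain ⟨U, hU, hUc⟩ := exists_ball_cover hY hb o R
  have hUne : U.Nonempty := ⟨o, hU o (by simp)⟩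
  obtain ⟨u, hu, hmax⟩ := U.exists_max_image
    (fun u => (Γ.filter fun x => p (f x) = u).card) hUne
  refine ⟨Γ.filter fun x => p (f x) = u, Finset.filter_subset _ _, ?_, ?_⟩
  · have h1 : Γ.card = ∑ w ∈ U, (Γ.filter fun x => p (f x) = w).card :=
      Finset.card_eq_sum_card_fiberwise fun x _ => hU _ (by rw [hp1]; exact min_le_left _ _)
    rw [h1]
    refine (Finset.sum_le_card_nsmul _ _ _ hmax).trans ?_
    rw [smul_eq_mul]
    exact Nat.mul_le_mul_right _ hUc
  · intro x hx z hz
    rw [Finset.mem_filter] at hx hz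
    have hx1 := hp1 (f x); have hx2 := hp2 (f x)
    have hz1 := hp1 (f z); have hz2 := hp2 (f z)
    rw [hx.2] at hx1 hx2
    rw [hz.2] at hz1 hz2
    by_cases h : Y.dist o u < R
    · left
      have h1 : Y.dist u (f x) = 0 := by omega
      have h2 : Y.dist u (f z) = 0 := by omega
      rw [hY.dist_eq_zero_iff] at h1 h2
      rw [← h1, ← h2]
    · right
      have e1 := hΔ o (f x) u (f z)
      have e2 := gromov_add hY o (f x) u
      have e3 := gromov_add hY o u (f z)
      rw [Y.dist_comm (u := f x) (v := u)] at e2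
      omega

/-- A sum of a decaying function of the distance to `o`, split at radius `r`: a ball contains at most
`M * (b + 1) ^ r` points, all the other points contribute at most `ν ^ r` each. -/
lemma sum_pow_dist_le (hY : Y.Connected) {b : ℕ} (hb : ∀ v, (Y.neighborSet v).encard ≤ b)
    {ν : ℝ} (hν0 : 0 < ν) (hν1 : ν < 1) {M : ℕ} (Γ : Finset α) (f : α → W) (o : W)
    (hM : ∀ w, {x | x ∈ Γ ∧ f x = w}.ncard ≤ M) (r : ℕ) :
    ∑ x ∈ Γ, ν ^ Y.dist o (f x) ≤ (M : ℝ) * (b + 1 : ℝ) ^ r + Γ.card * ν ^ r := by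
  classical
  obtain ⟨U, hU, hUc⟩ := exists_ball_cover hY hb o r
  have hfib : (Γ.filter fun x => Y.dist o (f x) ≤ r).card ≤ M * (b + 1) ^ r := by
    have h1 := Finset.card_le_mul_card_image_of_maps_to
      (s := Γ.filter fun x => Y.dist o (f x) ≤ r) (t := U) (f := f)
      (fun x hx => hU _ (Finset.mem_filter.1 hx).2) M (fun w _ => by
        refine le_trans ?_ (hM w)
        rw [← Set.ncard_coe_finset]
        refine Set.ncard_le_ncard ?_ (Γ.finite_toSet.subset fun x hx => hx.1)
        intro x hx
        simp only [Finset.coe_filter, Finset.mem_filter, Set.mem_ofPred_eq] at hx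
        exact ⟨hx.1.1, hx.2⟩)
    exact h1.trans (Nat.mul_le_mul_left _ hUc)
  rw [← Finset.sum_filter_add_sum_filter_not Γ (fun x => Y.dist o (f x) ≤ r)]
  refine add_le_add ?_ ?_
  · refine (Finset.sum_le_card_nsmul _ _ 1 fun x _ => pow_le_one₀ hν0.le hν1.le).trans ?_
    rw [nsmul_eq_mul, mul_one]
    exact_mod_cast hfib
  · refine (Finset.sum_le_card_nsmul _ _ (ν ^ r) fun x hx => ?_).trans ?_
    · exact pow_le_pow_of_le_one hν0.le hν1.le (not_le.1 (Finset.mem_filter.1 hx).2).le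
    · rw [nsmul_eq_mul]
      exact mul_le_mul_of_nonneg_right (by exact_mod_cast Finset.card_filter_le _ _)
        (by positivity)

/-- Finite sets mapped regularly to a hyperbolic graph of bounded degree can be cut into two
pieces of comparable size along at most `C n ^ (1 - η)` edges. -/
lemma exists_cut {G : Type*} [Group G] (hY : Y.Connected) {b : ℕ}
    (hb : ∀ v, (Y.neighborSet v).encard ≤ b) {D : ℕ} (hD : SlimGeodesics Y D)
    (f : G → W) (S : Finset G) (K M : ℕ)
    (hK : ∀ x, ∀ s ∈ S, Y.dist (f x) (f (x * s)) ≤ K)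
    (hM : ∀ (Γ : Finset G) (w : W), {x | x ∈ Γ ∧ f x = w}.ncard ≤ M) :
    ∃ (N : ℕ) (η C : ℝ), 0 < N ∧ 0 < η ∧ 0 ≤ C ∧ ∀ Γ : Finset G, Γ.Nonempty → 7 * M ≤ Γ.card →
      ∃ A ⊆ Γ, Γ.card ≤ N * A.card ∧ Γ.card ≤ N * {x | x ∈ Γ ∧ x ∉ A}.ncard ∧
        ({q : G × G | q.1 ∈ A ∧ q.2 ∈ S ∧ q.1 * q.2 ∈ Γ ∧ q.1 * q.2 ∉ A}.ncard : ℝ)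
          ≤ C * (Γ.card : ℝ) ^ (1 - η) := by
  classical
  have hΔ := gromov_min_le hY hD
  obtain ⟨Δ, hΔe⟩ : ∃ Δ, Δ = 6 * D + 2 := ⟨_, rfl⟩
  rw [← hΔe] at hΔ
  have hΔ0 : 0 < Δ := by omega
  obtain ⟨μ, hμ0, hμ1, hvis⟩ := exists_visual (Y := Y) Δ hΔ
  obtain ⟨k, hk⟩ := exists_pow_lt_of_lt_one (show (0 : ℝ) < 1 / 4 by norm_num) hμ1
  have hν0 : 0 < μ ^ 2 := by positivity
  have hν1 : μ ^ 2 < 1 := pow_lt_one₀ hμ0.le hμ1 (by norm_num)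
  obtain ⟨η, C, hη, hC, hbal⟩ := exists_balance hν0 hν1 M b
  -- `2 * R - Δ ≥ 8 * Δ + k`, so a cluster of precision `R` has visual diameter at most
  -- `μ ^ (8 * Δ) / 4 = τ`, while points outside the direction of `median_spread` are `2 * τ` away
  obtain ⟨R, hR⟩ : ∃ R, R = 5 * Δ + k := ⟨_, rfl⟩
  obtain ⟨τ, hτ⟩ : ∃ τ, τ = μ ^ (8 * Δ) / 4 := ⟨_, rfl⟩
  have hτ0 : 0 < τ := by rw [hτ]; positivity
  refine ⟨(b + 1) ^ R + 4, η, S.card * ((μ ^ (2 * K))⁻¹ * C) / τ, by positivity, hη,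
    by positivity, fun Γ hΓ hcard => ?_⟩
  have : Nonempty W := ⟨f 1⟩
  obtain ⟨o, ho⟩ := exists_median Y Γ f
  obtain ⟨v, hv0, hvnn, hvc, hvt, hvle, hvge⟩ := hvis o
  obtain ⟨A₀, hA₀, hA₀c, hA₀d⟩ := exists_cluster hY hb hΔ Γ f o R
  have hn : 0 < Γ.card := hΓ.card_pos
  obtain ⟨z, hz⟩ : A₀.Nonempty := by
    rw [← Finset.card_pos]
    exact Nat.pos_of_mul_pos_left (lt_of_lt_of_le hn hA₀c)
  let φ : G → ℝ := fun x => v (f x) (f z)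
  have hnear : ∀ x ∈ A₀, φ x ≤ τ := by
    intro x hx
    rcases hA₀d x hx z hz with h | h
    · simp only [φ]; rw [h, hv0]; exact hτ0.le
    · refine (hvle _ _).trans ?_
      calc μ ^ gromov Y o (f x) (f z) ≤ μ ^ (8 * Δ + k) :=
            pow_le_pow_of_le_one hμ0.le hμ1.le (by omega)
        _ = μ ^ (8 * Δ) * μ ^ k := pow_add _ _ _
        _ ≤ μ ^ (8 * Δ) * (1 / 4) := mul_le_mul_of_nonneg_left hk.le (by positivity)
        _ = τ := by rw [hτ]; ring
  obtain ⟨t, ht1, ht2, hcount⟩ := exists_level (Γ ×ˢ S) (fun q => φ q.1)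
    (fun q => φ (q.1 * q.2)) (show τ < 2 * τ by linarith)
  refine ⟨Γ.filter fun x => φ x ≤ t, Finset.filter_subset _ _, ?_, ?_, ?_⟩
  · refine hA₀c.trans (Nat.mul_le_mul (by omega) (Finset.card_le_card fun x hx => ?_))
    exact Finset.mem_filter.2 ⟨hA₀ hx, (hnear x hx).trans ht1⟩
  · have hspread := median_spread hY hΔ0 hΔ Γ f o ho (f z)
    have hfib := hM Γ (f z)
    have hcover : Γ.card ≤ (Γ.filter fun x => 8 * Δ ≤ gromov Y o (f x) (f z)).card +
        {x | x ∈ Γ ∧ f x = f z}.ncard +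
        {x | x ∈ Γ ∧ x ∉ Γ.filter fun x => φ x ≤ t}.ncard := by
      rw [← Set.ncard_coe_finset Γ, ← Set.ncard_coe_finset (Γ.filter _)]
      refine (Set.ncard_le_ncard (fun x hx => ?_) ?_).trans
        ((Set.ncard_union_le _ _).trans (Nat.add_le_add_right (Set.ncard_union_le _ _) _))
      · by_cases h1 : 8 * Δ ≤ gromov Y o (f x) (f z)
        · exact Or.inl (Or.inl (Finset.mem_coe.2 (Finset.mem_filter.2 ⟨hx, h1⟩)))
        by_cases h2 : f x = f z
        · exact Or.inl (Or.inr ⟨hx, h2⟩)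
        right
        refine ⟨hx, fun h3 => ?_⟩
        have h4 := hvge _ _ h2
        have h5 : μ ^ (8 * Δ) ≤ μ ^ gromov Y o (f x) (f z) :=
          pow_le_pow_of_le_one hμ0.le hμ1.le (by omega)
        have h6 : φ x ≤ t := (Finset.mem_filter.1 h3).2
        simp only [φ] at h6
        linarith
      · exact ((Finset.finite_toSet _).union (Γ.finite_toSet.subset fun x hx => hx.1)).union
          (Γ.finite_toSet.subset fun x hx => hx.1)
    have h7 : Γ.card ≤ 4 * {x | x ∈ Γ ∧ x ∉ Γ.filter fun x => φ x ≤ t}.ncard := by omega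
    exact h7.trans (Nat.mul_le_mul_right _ (by omega))
  · have hset : {q : G × G | q.1 ∈ Γ.filter (fun x => φ x ≤ t) ∧ q.2 ∈ S ∧ q.1 * q.2 ∈ Γ ∧
        q.1 * q.2 ∉ Γ.filter fun x => φ x ≤ t}.ncard
        ≤ ((Γ ×ˢ S).filter fun q => φ q.1 ≤ t ∧ t < φ (q.1 * q.2)).card := by
      rw [← Set.ncard_coe_finset]
      refine Set.ncard_le_ncard (fun q hq => ?_) (Finset.finite_toSet _)
      obtain ⟨h1, h2, h3, h4⟩ := hq
      rw [Finset.mem_filter] at h1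
      rw [Finset.mem_coe, Finset.mem_filter, Finset.mem_product]
      refine ⟨⟨h1.1, h2⟩, h1.2, ?_⟩
      by_contra h5
      exact h4 (Finset.mem_filter.2 ⟨h3, not_lt.1 h5⟩)
    -- the Gromov product of two points at distance `≤ K` is at least twice their distance to `o`,
    -- up to `2 * K`, so far from the median all edges are visually short
    have hedge : ∀ q ∈ Γ ×ˢ S, |φ (q.1 * q.2) - φ q.1| ≤
        (μ ^ (2 * K))⁻¹ * (μ ^ 2) ^ Y.dist o (f q.1) := by
      intro q hq
      rw [Finset.mem_product] at hq
      have h1 : |φ (q.1 * q.2) - φ q.1| ≤ v (f q.1) (f (q.1 * q.2)) := by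
        rw [abs_le]
        have e1 := hvt (f (q.1 * q.2)) (f q.1) (f z)
        have e2 := hvt (f q.1) (f (q.1 * q.2)) (f z)
        rw [hvc (f (q.1 * q.2)) (f q.1)] at e1
        constructor <;> simp only [φ] <;> linarith
      refine h1.trans ((hvle _ _).trans ?_)
      rw [← pow_mul, inv_mul_eq_div, le_div_iff₀ (by positivity), ← pow_add]
      refine pow_le_pow_of_le_one hμ0.le hμ1.le ?_
      have e1 := gromov_add hY o (f q.1) (f (q.1 * q.2))
      have e2 := hK q.1 q.2 hq.2
      have e3 := hY.dist_triangle (u := o) (v := f (q.1 * q.2)) (w := f q.1)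
      rw [Y.dist_comm (u := f (q.1 * q.2))] at e3
      omega
    obtain ⟨r, hr⟩ := hbal Γ.card hn
    have hsum : ∑ q ∈ Γ ×ˢ S, |φ (q.1 * q.2) - φ q.1| ≤
        S.card * ((μ ^ (2 * K))⁻¹ * (C * (Γ.card : ℝ) ^ (1 - η))) := by
      refine (Finset.sum_le_sum hedge).trans ?_
      rw [Finset.sum_product]
      simp only [Finset.sum_const, nsmul_eq_mul]
      rw [← Finset.mul_sum, ← Finset.mul_sum]
      refine mul_le_mul_of_nonneg_left (mul_le_mul_of_nonneg_left ?_ (by positivity))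
        (Nat.cast_nonneg _)
      exact (sum_pow_dist_le hY hb hν0 hν1 Γ f o (hM Γ) r).trans hr
    have hset' : ({q : G × G | q.1 ∈ Γ.filter (fun x => φ x ≤ t) ∧ q.2 ∈ S ∧ q.1 * q.2 ∈ Γ ∧
        q.1 * q.2 ∉ Γ.filter fun x => φ x ≤ t}.ncard : ℝ) ≤ _ := Nat.cast_le.2 hset
    refine hset'.trans ?_
    rw [div_mul_eq_mul_div, le_div_iff₀ hτ0]
    calc _ = (2 * τ - τ) * (((Γ ×ˢ S).filter fun q => φ q.1 ≤ t ∧ t < φ (q.1 * q.2)).card : ℝ) := by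
          ring
      _ ≤ _ := hcount.trans hsum
      _ = _ := by ring

end Cut

/-! ### Isoperimetry and growth -/

section Descent

open scoped Pointwise

variable {G : Type*} [Group G] [DecidableEq G]

/-- Number of edges `x → x * s`, with `s ∈ S`, leaving the finite set `A`. -/
def bdry (S A : Finset G) : ℕ := ((A ×ˢ S).filter fun q => q.1 * q.2 ∉ A).card

/-- Number of edges `x → x * s`, with `s ∈ S`, from `A` to `B`. -/
def edges (S A B : Finset G) : ℕ := ((A ×ˢ S).filter fun q => q.1 * q.2 ∈ B).card

lemma edges_comm_le {S : Finset G} (hS : ∀ s ∈ S, s⁻¹ ∈ S) (A B : Finset G) :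
    edges S B A ≤ edges S A B := by
  refine Finset.card_le_card_of_injOn (fun q => (q.1 * q.2, q.2⁻¹)) ?_ ?_
  · intro q hq
    simp only [Finset.coe_filter, Finset.mem_product, Set.mem_ofPred_eq] at hq ⊢
    exact ⟨⟨hq.2, hS _ hq.1.2⟩, by simpa using hq.1.1⟩
  · rintro ⟨a, s⟩ _ ⟨a', s'⟩ _ h
    simp only [Prod.mk.injEq, inv_inj] at h ⊢
    obtain ⟨h1, rfl⟩ := h
    exact ⟨mul_right_cancel h1, rfl⟩

lemma bdry_add_bdry_le {S : Finset G} (hS : ∀ s ∈ S, s⁻¹ ∈ S) {A Γ : Finset G} (hA : A ⊆ Γ) :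
    bdry S A + bdry S (Γ \ A) ≤ bdry S Γ + 2 * edges S A (Γ \ A) := by
  have h1 : bdry S A ≤ ((A ×ˢ S).filter fun q => q.1 * q.2 ∉ Γ).card + edges S A (Γ \ A) := by
    refine (Finset.card_le_card fun q hq => ?_).trans (Finset.card_union_le _ _)
    simp only [Finset.mem_filter, Finset.mem_product, Finset.mem_union, Finset.mem_sdiff] at hq ⊢
    tauto
  have h2 : bdry S (Γ \ A) ≤ (((Γ \ A) ×ˢ S).filter fun q => q.1 * q.2 ∉ Γ).card
      + edges S (Γ \ A) A := by
    refine (Finset.card_le_card fun q hq => ?_).trans (Finset.card_union_le _ _)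
    simp only [Finset.mem_filter, Finset.mem_product, Finset.mem_union, Finset.mem_sdiff] at hq ⊢
    tauto
  have h3 : ((A ×ˢ S).filter fun q => q.1 * q.2 ∉ Γ).card +
      (((Γ \ A) ×ˢ S).filter fun q => q.1 * q.2 ∉ Γ).card = bdry S Γ := by
    rw [← Finset.card_union_of_disjoint, bdry]
    · congr 1
      ext q
      simp only [Finset.mem_filter, Finset.mem_product, Finset.mem_union, Finset.mem_sdiff]
      have := @hA q.1
      tauto
    · rw [Finset.disjoint_left]
      intro q hq hq'
      simp only [Finset.mem_filter, Finset.mem_product, Finset.mem_sdiff] at hq hq'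
      tauto
  have h4 := edges_comm_le hS A (Γ \ A)
  omega

/-- A translation by a product of `r` elements of `S` moves at most `r * bdry S A` points of `A` out
of `A`, since each of these points crosses the boundary on the way. -/
lemma card_leave_le (S A : Finset G) (r : ℕ) :
    ∀ g ∈ S ^ r, (A.filter fun x => x * g ∉ A).card ≤ r * bdry S A := by
  induction r with
  | zero =>
    intro g hg
    rw [pow_zero, Finset.mem_one] at hg
    subst hg
    simp
  | succ r ih =>
    intro g hg
    rw [pow_succ, Finset.mem_mul] at hg
    obtain ⟨h, hh, s, hs, rfl⟩ := hg
    have h1 : (A.filter fun x => x * h ∈ A ∧ x * h * s ∉ A).card ≤ bdry S A := by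
      refine Finset.card_le_card_of_injOn (fun x => (x * h, s)) ?_ ?_
      · intro x hx
        simp only [Finset.coe_filter, Finset.mem_product, Set.mem_ofPred_eq] at hx ⊢
        exact ⟨⟨hx.2.1, hs⟩, hx.2.2⟩
      · intro x _ y _ hxy
        exact mul_right_cancel (Prod.ext_iff.1 hxy).1
    rw [add_mul, one_mul]
    refine le_trans ?_ (add_le_add (ih h hh) h1)
    refine (Finset.card_le_card fun x hx => ?_).trans (Finset.card_union_le _ _)
    simp only [Finset.mem_filter, Finset.mem_union, ← mul_assoc] at hx ⊢
    tauto

/-- The isoperimetric inequality of Coulhon and Saloff-Coste: a set of at most half the size of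
the ball of radius `r` has boundary at least `1 / (2 r)` of its size, because a translation by a
random element of the ball moves at least half of the set out of itself. -/
lemma card_le_mul_bdry (S A : Finset G) (r : ℕ) (h : 2 * A.card ≤ (S ^ r).card)
    (hne : (S ^ r).Nonempty) : A.card ≤ 2 * r * bdry S A := by
  have h1 : ∑ g ∈ S ^ r, (A.filter fun x => x * g ∉ A).card
      ≤ (S ^ r).card * (r * bdry S A) :=
    (Finset.sum_le_card_nsmul _ _ _ (card_leave_le S A r)).trans (by rw [smul_eq_mul])
  have h2 : ∑ g ∈ S ^ r, (A.filter fun x => x * g ∉ A).card =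
      ∑ x ∈ A, ((S ^ r).filter fun g => x * g ∉ A).card := by
    simp only [Finset.card_filter]
    exact Finset.sum_comm
  have h3 : A.card * ((S ^ r).card - A.card) ≤
      ∑ x ∈ A, ((S ^ r).filter fun g => x * g ∉ A).card := by
    rw [← smul_eq_mul]
    refine Finset.card_nsmul_le_sum _ _ _ fun x _ => ?_
    have h4 : ((S ^ r).filter fun g => x * g ∈ A).card ≤ A.card :=
      Finset.card_le_card_of_injOn (fun g => x * g)
        (fun g hg => (Finset.mem_filter.1 hg).2) fun g _ g' _ hgg => mul_left_cancel hgg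
    have h5 := Finset.card_filter_add_card_filter_not (s := S ^ r) (fun g => x * g ∈ A)
    omega
  have hpos : 0 < (S ^ r).card := hne.card_pos
  obtain ⟨c, hc⟩ : ∃ c, (S ^ r).card = A.card + c := ⟨_, (Nat.add_sub_cancel' (by omega)).symm⟩
  rw [h2] at h1
  have h6 := h3.trans h1
  rw [hc, Nat.add_sub_cancel_left] at h6
  rw [hc] at h hpos
  have h7 : A.card ≤ c := by omega
  have h8 : A.card * (A.card + c) ≤ (2 * r * bdry S A) * (A.card + c) := by nlinarith
  exact Nat.le_of_mul_le_mul_right h8 hpos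

/-- The family of finite sets admits cuts into two comparable pieces along at most
`C n ^ (1 - η)` edges, as soon as their size `n` is at least `m`. -/
def HasCuts (S : Finset G) (N m : ℕ) (η C : ℝ) : Prop :=
  ∀ Γ : Finset G, Γ.Nonempty → m ≤ Γ.card → ∃ A ⊆ Γ, Γ.card ≤ N * A.card ∧
    Γ.card ≤ N * (Γ \ A).card ∧ (edges S A (Γ \ A) : ℝ) ≤ C * (Γ.card : ℝ) ^ (1 - η)

/-- One cut: the better piece has almost as good an isoperimetric ratio. -/
lemma exists_piece {S : Finset G} (hS : ∀ s ∈ S, s⁻¹ ∈ S) {N m : ℕ} {η C : ℝ}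
    (hcut : HasCuts S N m η C) (Γ : Finset G) (hΓ : Γ.Nonempty) (hm : m ≤ Γ.card) :
    ∃ A : Finset G, Γ.card ≤ N * A.card ∧ N * A.card + Γ.card ≤ N * Γ.card ∧
      (bdry S A : ℝ) / A.card ≤ bdry S Γ / Γ.card + 2 * C * (Γ.card : ℝ) ^ (-η) := by
  obtain ⟨A, hA, h1, h2, h3⟩ := hcut Γ hΓ hm
  have hn : 0 < Γ.card := hΓ.card_pos
  have hn' : (0 : ℝ) < Γ.card := by exact_mod_cast hn
  have hsum : A.card + (Γ \ A).card = Γ.card := by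
    rw [add_comm]; exact Finset.card_sdiff_add_card_eq_card hA
  have hb : (bdry S A : ℝ) + bdry S (Γ \ A) ≤ bdry S Γ + 2 * edges S A (Γ \ A) := by
    exact_mod_cast bdry_add_bdry_le hS hA
  have hpow : (Γ.card : ℝ) ^ (1 - η) = Γ.card * (Γ.card : ℝ) ^ (-η) := by
    rw [sub_eq_add_neg, Real.rpow_add hn', Real.rpow_one]
  rw [hpow] at h3
  obtain ⟨ρ, hρ⟩ : ∃ ρ, ρ = (bdry S Γ : ℝ) / Γ.card + 2 * C * (Γ.card : ℝ) ^ (-η) := ⟨_, rfl⟩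
  have htot : (bdry S A : ℝ) + bdry S (Γ \ A) ≤ ρ * A.card + ρ * (Γ \ A).card := by
    have : ρ * A.card + ρ * (Γ \ A).card =
        bdry S Γ + 2 * (C * (Γ.card * (Γ.card : ℝ) ^ (-η))) := by
      rw [← mul_add, ← Nat.cast_add, hsum, hρ, add_mul, div_mul_cancel₀ _ hn'.ne']
      ring
    rw [this]; linarith
  rw [← hρ]
  have hApos : 0 < A.card := Nat.pos_of_mul_pos_left (lt_of_lt_of_le hn h1)
  have hBpos : 0 < (Γ \ A).card := Nat.pos_of_mul_pos_left (lt_of_lt_of_le hn h2)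
  have hNsum : N * A.card + N * (Γ \ A).card = N * Γ.card := by rw [← mul_add, hsum]
  by_cases h : (bdry S A : ℝ) ≤ ρ * A.card
  · refine ⟨A, h1, by omega, ?_⟩
    rwa [div_le_iff₀ (by exact_mod_cast hApos)]
  · refine ⟨Γ \ A, h2, by omega, ?_⟩
    rw [div_le_iff₀ (by exact_mod_cast hBpos)]
    linarith

/-- Iterating the cuts: a large set with small isoperimetric ratio contains sets of every size,
up to a constant factor, whose ratio is controlled. The increments of the ratio form a geometric
series dominated by its last term. -/
lemma exists_descent {S : Finset G} (hS : ∀ s ∈ S, s⁻¹ ∈ S) {N m : ℕ} {η C : ℝ} (hN : 2 ≤ N)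
    (hη : 0 < η) (hC : 0 ≤ C) (hcut : HasCuts S N m η C) :
    ∃ κ : ℝ, 0 < κ ∧ ∀ n, 0 < n → m ≤ n → ∀ Γ : Finset G, n ≤ N * Γ.card →
      ∃ A : Finset G, A.card ≤ n ∧ n ≤ N * A.card ∧
        (bdry S A : ℝ) / A.card ≤ bdry S Γ / Γ.card + κ * (A.card : ℝ) ^ (-η) := by
  have hN' : (2 : ℝ) ≤ N := by exact_mod_cast hN
  obtain ⟨θ, hθ⟩ : ∃ θ : ℝ, θ = 1 - 1 / N := ⟨_, rfl⟩
  have hinv : (1 : ℝ) / N ≤ 1 / 2 := one_div_le_one_div_of_le (by norm_num) hN'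
  have hinv0 : (0 : ℝ) < 1 / N := by positivity
  have hθ0 : 0 < θ := by linarith
  have hθ1 : θ < 1 := by linarith
  have hgap : 1 < θ ^ (-η) := Real.one_lt_rpow_of_pos_of_lt_one_of_neg hθ0 hθ1 (by linarith)
  obtain ⟨κ, hκ⟩ : ∃ κ : ℝ, κ = (2 * C + 1) / (θ ^ (-η) - 1) := ⟨_, rfl⟩
  have hκ0 : 0 < κ := by rw [hκ]; apply div_pos <;> linarith
  have hκ1 : κ * (θ ^ (-η) - 1) = 2 * C + 1 := by
    rw [hκ]; exact div_mul_cancel₀ _ (by linarith)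
  refine ⟨κ, hκ0, fun n hn0 hmn => ?_⟩
  suffices H : ∀ k, ∀ Γ : Finset G, Γ.card = k → n ≤ N * Γ.card →
      ∃ A : Finset G, A.card ≤ n ∧ n ≤ N * A.card ∧
        (bdry S A : ℝ) / A.card - κ * (A.card : ℝ) ^ (-η)
          ≤ bdry S Γ / Γ.card - κ * (Γ.card : ℝ) ^ (-η) by
    intro Γ hΓ
    obtain ⟨A, h1, h2, h3⟩ := H _ Γ rfl hΓ
    have : 0 ≤ κ * (Γ.card : ℝ) ^ (-η) := by positivity
    exact ⟨A, h1, h2, by linarith⟩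
  intro k
  induction k using Nat.strong_induction_on with
  | _ k ih =>
    intro Γ hk hΓ
    by_cases hle : Γ.card ≤ n
    · exact ⟨Γ, hle, hΓ, le_rfl⟩
    obtain ⟨A, h1, h2, h3⟩ := exists_piece hS hcut Γ (Finset.card_pos.1 (by omega)) (by omega)
    have hlt : A.card < k := by
      rw [← hk]
      exact Nat.lt_of_mul_lt_mul_left (a := N) (by omega)
    obtain ⟨A', h1', h2', h3'⟩ := ih _ hlt A rfl (by omega)
    refine ⟨A', h1', h2', h3'.trans ?_⟩
    have hA0 : (0 : ℝ) < A.card := by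
      exact_mod_cast Nat.pos_of_mul_pos_left (lt_of_lt_of_le (by omega) h1)
    have hΓ0 : (0 : ℝ) < Γ.card := by exact_mod_cast (show 0 < Γ.card by omega)
    have hAθ : (A.card : ℝ) ≤ θ * Γ.card := by
      have h4 : (N : ℝ) * A.card + Γ.card ≤ N * Γ.card := by exact_mod_cast h2
      rw [hθ, sub_mul, one_mul, one_div_mul_eq_div, le_sub_iff_add_le,
        ← mul_le_mul_iff_right₀ (show (0 : ℝ) < N by linarith), mul_add,
        mul_div_cancel₀ _ (show (N : ℝ) ≠ 0 by linarith)]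
      exact h4
    have hpow : θ ^ (-η) * (Γ.card : ℝ) ^ (-η) ≤ (A.card : ℝ) ^ (-η) := by
      rw [← Real.mul_rpow hθ0.le hΓ0.le]
      exact Real.rpow_le_rpow_of_nonpos hA0 hAθ (by linarith)
    have hX : 0 ≤ (Γ.card : ℝ) ^ (-η) := by positivity
    have h5 := mul_le_mul_of_nonneg_left hpow hκ0.le
    have h6 : κ * (θ ^ (-η) * (Γ.card : ℝ) ^ (-η)) =
        κ * (Γ.card : ℝ) ^ (-η) + (2 * C + 1) * (Γ.card : ℝ) ^ (-η) := by
      rw [← hκ1]; ring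
    linarith

lemma Folner.exists_bdry (hF : Folner G) (S : Finset G) {ε : ℝ} (hε : 0 < ε) :
    ∃ F : Finset G, F.Nonempty ∧ (bdry S F : ℝ) ≤ ε * F.card := by
  obtain ⟨F, hne, h⟩ := hF S (ε / (S.card + 1)) (by positivity)
  refine ⟨F, hne, ?_⟩
  have h1 : bdry S F = ∑ s ∈ S, (F.filter fun x => x * s ∉ F).card := by
    rw [bdry, Finset.card_filter, Finset.sum_product_right]
    simp only [Finset.card_filter]
  rw [h1, Nat.cast_sum]
  have h2 : ∀ s ∈ S, ((F.filter fun x => x * s ∉ F).card : ℝ) ≤ ε / (S.card + 1) * F.card := by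
    intro s hs
    convert h s hs
  refine (Finset.sum_le_card_nsmul _ _ _ h2).trans ?_
  rw [nsmul_eq_mul, ← mul_assoc]
  refine mul_le_mul_of_nonneg_right ?_ (Nat.cast_nonneg _)
  rw [mul_div_assoc', div_le_iff₀ (by positivity)]
  nlinarith

/-- An amenable group all of whose finite sets are easy to cut has polynomial growth. -/
lemma exists_card_pow_le (hF : Folner G) {S : Finset G} (h1S : 1 ∈ S) (hS : ∀ s ∈ S, s⁻¹ ∈ S)
    {N m : ℕ} {η C : ℝ} (hN : 2 ≤ N) (hη : 0 < η) (hC : 0 ≤ C) (hcut : HasCuts S N m η C) :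
    ∃ c d : ℕ, ∀ r, (S ^ r).card ≤ c * (r + 1) ^ d := by
  obtain ⟨κ, hκ, hdes⟩ := exists_descent hS hN hη hC hcut
  obtain ⟨d, hd⟩ := exists_nat_ge (1 / η)
  obtain ⟨c, hc⟩ := exists_nat_ge (2 * N * (4 * κ) ^ (1 / η) + 1)
  refine ⟨c + 2 * m + 1, d, fun r => ?_⟩
  have hrd : 1 ≤ (r + 1) ^ d := Nat.one_le_pow _ _ (by omega)
  have hSr : (S ^ r).Nonempty := Finset.Nonempty.pow ⟨1, h1S⟩
  by_cases hsmall : (S ^ r).card / 2 < m ∨ (S ^ r).card / 2 = 0 ∨ r = 0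
  · have : (S ^ r).card ≤ 2 * m + 1 := by
      rcases hsmall with h | h | h
      · omega
      · omega
      · subst h; simp
    nlinarith
  push Not at hsmall
  obtain ⟨hm, hn0, hr0⟩ := hsmall
  obtain ⟨n, hn⟩ : ∃ n, n = (S ^ r).card / 2 := ⟨_, rfl⟩
  rw [← hn] at hm hn0
  have hr : (0 : ℝ) < r := by exact_mod_cast Nat.pos_of_ne_zero hr0
  obtain ⟨F, hFne, hFb⟩ := hF.exists_bdry S (show (0 : ℝ) < 1 / (4 * r) by positivity)
  have hFpos : (0 : ℝ) < F.card := by exact_mod_cast hFne.card_pos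
  -- the isoperimetric inequality at scale `r` forces the Følner set to be large
  have hFbig : (S ^ r).card < 2 * F.card := by
    by_contra hcon
    have h1 := card_le_mul_bdry S F r (not_lt.1 hcon) hSr
    have h2 : (F.card : ℝ) ≤ 2 * r * bdry S F := by exact_mod_cast h1
    have h3 : 2 * r * (1 / (4 * r) * F.card) = F.card / (2 : ℝ) := by field_simp; norm_num
    have h4 := mul_le_mul_of_nonneg_left hFb (show (0 : ℝ) ≤ 2 * r by positivity)
    linarith
  have hnF : n ≤ F.card := by omega
  obtain ⟨A, hA1, hA2, hA3⟩ := hdes n (Nat.pos_of_ne_zero hn0) hm F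
    (hnF.trans (Nat.le_mul_of_pos_left _ (by omega)))
  have hA0 : 0 < A.card := Nat.pos_of_mul_pos_left (lt_of_lt_of_le (Nat.pos_of_ne_zero hn0) hA2)
  have hA0' : (0 : ℝ) < A.card := by exact_mod_cast hA0
  have h1 := card_le_mul_bdry S A r (by omega) hSr
  have h2 : (A.card : ℝ) ≤ 2 * r * bdry S A := by exact_mod_cast h1
  have h3 : 1 / (2 * r) ≤ (bdry S A : ℝ) / A.card := by
    rw [div_le_div_iff₀ (by positivity) hA0']; linarith
  have h4 : (bdry S F : ℝ) / F.card ≤ 1 / (4 * r) := by rwa [div_le_iff₀ hFpos]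
  have h5 : 1 / (4 * r) ≤ κ * (A.card : ℝ) ^ (-η) := by
    have : (1 : ℝ) / (2 * r) = 1 / (4 * r) + 1 / (4 * r) := by field_simp; norm_num
    linarith
  have h6 : (A.card : ℝ) ^ η ≤ 4 * κ * r := by
    rw [Real.rpow_neg hA0'.le, ← div_eq_mul_inv, div_le_div_iff₀ (by positivity) (by positivity)]
      at h5
    linarith
  have h7 : (A.card : ℝ) ≤ (4 * κ) ^ (1 / η) * (r + 1 : ℝ) ^ d := by
    calc (A.card : ℝ) = ((A.card : ℝ) ^ η) ^ (1 / η) := by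
          rw [← Real.rpow_mul hA0'.le, mul_one_div_cancel hη.ne', Real.rpow_one]
      _ ≤ (4 * κ * r) ^ (1 / η) := Real.rpow_le_rpow (by positivity) h6 (by positivity)
      _ = (4 * κ) ^ (1 / η) * (r : ℝ) ^ (1 / η) := Real.mul_rpow (by positivity) hr.le
      _ ≤ (4 * κ) ^ (1 / η) * (r + 1 : ℝ) ^ d := by
        refine mul_le_mul_of_nonneg_left ?_ (by positivity)
        rw [← Real.rpow_natCast]
        exact (Real.rpow_le_rpow hr.le (by linarith) (by positivity)).trans
          (Real.rpow_le_rpow_of_exponent_le (by linarith) hd)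
  have h8 : (S ^ r).card ≤ 2 * (N * A.card) + 1 := by omega
  have h9 : ((S ^ r).card : ℝ) ≤ 2 * (N * A.card) + 1 := by exact_mod_cast h8
  have hrd' : (1 : ℝ) ≤ (r + 1 : ℝ) ^ d := by exact_mod_cast hrd
  have h10 : ((S ^ r).card : ℝ) ≤ c * (r + 1 : ℝ) ^ d := by
    have hN0 : (0 : ℝ) ≤ 2 * N := by positivity
    have := mul_le_mul_of_nonneg_left h7 hN0
    have := mul_le_mul_of_nonneg_right hc (show (0 : ℝ) ≤ (r + 1 : ℝ) ^ d by positivity)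
    nlinarith
  have h11 : (S ^ r).card ≤ c * (r + 1) ^ d := by exact_mod_cast h10
  nlinarith

end Descent

/-! ### Cayley graphs -/

section Cayley

open scoped Pointwise

lemma polyGrowth_of_card_pow_le {G : Type*} [Group G] (S : Set G) (hS : S.Finite) (h1S : 1 ∈ S)
    (hinv : ∀ s ∈ S, s⁻¹ ∈ S) (hgen : Subgroup.closure S = ⊤) {c d : ℕ}
    (h : ∀ r, (S ^ r).ncard ≤ c * (r + 1) ^ d) : PolyGrowth G := by
  have hmem : ∀ g : G, ∃ r, g ∈ S ^ r := by
    intro g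
    have hg : g ∈ Subgroup.closure S := by rw [hgen]; trivial
    induction hg using Subgroup.closure_induction with
    | mem x hx => exact ⟨1, by rwa [pow_one]⟩
    | one => exact ⟨0, by simp⟩
    | mul x y _ _ hx hy =>
      obtain ⟨p, hp⟩ := hx
      obtain ⟨q, hq⟩ := hy
      exact ⟨p + q, by rw [pow_add]; exact Set.mul_mem_mul hp hq⟩
    | inv x _ hx =>
      obtain ⟨p, hp⟩ := hx
      refine ⟨p, ?_⟩
      have hSi : S⁻¹ ⊆ S := fun s hs => by simpa using hinv _ hs
      have h1 : x⁻¹ ∈ (S ^ p)⁻¹ := Set.inv_mem_inv.2 hp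
      rw [← inv_pow] at h1
      exact Set.pow_subset_pow_left hSi h1
  intro T hT
  obtain ⟨m, hm⟩ : ∃ m, T ⊆ S ^ m := by
    choose r hr using hmem
    obtain ⟨m, hm⟩ := (hT.image r).bddAbove
    exact ⟨m, fun t ht => Set.pow_subset_pow_right h1S (hm ⟨t, ht, rfl⟩) (hr t)⟩
  refine ⟨c * (m + 1) ^ d, d, fun n => ?_⟩
  have h1 : T ^ n ⊆ S ^ (m * n) := by rw [pow_mul]; exact Set.pow_subset_pow_left hm
  refine (Set.ncard_le_ncard h1 (set_finite_pow hS _)).trans ((h _).trans ?_)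
  rw [mul_assoc, ← mul_pow]
  exact Nat.mul_le_mul_left _ (Nat.pow_le_pow_left (by nlinarith) _)

variable {G : Type*} [Group G]

lemma cayleyGraph_adj_iff {S : Set G} (hS : ∀ s ∈ S, s⁻¹ ∈ S) {x y : G} :
    (cayleyGraph G S).Adj x y ↔ x ≠ y ∧ x⁻¹ * y ∈ S := by
  rw [cayleyGraph, SimpleGraph.fromRel_adj]
  refine and_congr_right fun _ => ⟨fun h => h.elim id fun h => ?_, Or.inl⟩
  simpa using hS _ h

lemma cayleyGraph_dist_le_one {S : Set G} (hS : ∀ s ∈ S, s⁻¹ ∈ S) (x : G) {s : G} (hs : s ∈ S) :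
    (cayleyGraph G S).dist x (x * s) ≤ 1 := by
  by_cases h : x = x * s
  · rw [← h]; simp
  · exact (SimpleGraph.dist_eq_one_iff_adj.2 ((cayleyGraph_adj_iff hS).2 ⟨h, by simpa using hs⟩)).le

lemma cayleyGraph_reachable {S : Set G} (hS : ∀ s ∈ S, s⁻¹ ∈ S) (hgen : Subgroup.closure S = ⊤)
    (x y : G) : (cayleyGraph G S).Reachable x y := by
  suffices H : ∀ g x : G, (cayleyGraph G S).Reachable x (x * g) by
    have := H (x⁻¹ * y) x
    rwa [mul_inv_cancel_left] at this
  intro g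
  have hg : g ∈ Subgroup.closure S := by rw [hgen]; trivial
  induction hg using Subgroup.closure_induction with
  | mem s hs =>
    intro x
    by_cases h : x = x * s
    · rw [← h]
    · exact ((cayleyGraph_adj_iff hS).2 ⟨h, by simpa using hs⟩).reachable
  | one => intro x; rw [mul_one]
  | mul a b _ _ ha hb =>
    intro x
    rw [← mul_assoc]
    exact (ha x).trans (hb (x * a))
  | inv a _ ha =>
    intro x
    have := ha (x * a⁻¹)
    rw [inv_mul_cancel_right] at this
    exact this.symm

lemma mem_pow_of_walk {S : Set G} (hS : ∀ s ∈ S, s⁻¹ ∈ S) {x y : G}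
    (w : (cayleyGraph G S).Walk x y) : x⁻¹ * y ∈ S ^ w.length := by
  induction w with
  | nil => simp
  | @cons a b c h w ih =>
    rw [Walk.length_cons, add_comm, pow_add, pow_one]
    have := Set.mul_mem_mul ((cayleyGraph_adj_iff hS).1 h).2 ih
    rwa [mul_assoc, mul_inv_cancel_left] at this

/-- The fibres of a coarse embedding of a Cayley graph are uniformly bounded. -/
lemma exists_fibre_bound {W : Type*} {Y : SimpleGraph W} {S : Set G} (hfin : S.Finite)
    (hS : ∀ s ∈ S, s⁻¹ ∈ S) (hgen : Subgroup.closure S = ⊤) {f : G → W} {K : ℝ} {ρ : ℕ → ℕ}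
    (h : IsCoarseEmbedding (cayleyGraph G S) Y f K ρ) :
    ∃ M : ℕ, ∀ (Γ : Finset G) (w : W), {x | x ∈ Γ ∧ f x = w}.ncard ≤ M := by
  obtain ⟨-, hρ, hd⟩ := h
  obtain ⟨R, hR⟩ := Filter.eventually_atTop.1 (hρ.eventually_gt_atTop 0)
  have hBfin : ((insert 1 S) ^ R : Set G).Finite := set_finite_pow (hfin.insert 1) R
  refine ⟨((insert 1 S) ^ R : Set G).ncard, fun Γ w => ?_⟩
  rcases Set.eq_empty_or_nonempty {x | x ∈ Γ ∧ f x = w} with he | ⟨x, -, hx⟩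
  · rw [he]; simp
  refine Set.ncard_le_ncard_of_injOn (fun y => x⁻¹ * y) (fun y hy => ?_)
    (fun y _ z _ hyz => mul_left_cancel hyz) hBfin
  have h1 := (hd x y).1
  rw [hx, hy.2, SimpleGraph.dist_self] at h1
  have h2 : ρ ((cayleyGraph G S).dist x y) = 0 := by
    exact Nat.le_zero.1 (by exact_mod_cast h1)
  have h3 : (cayleyGraph G S).dist x y ≤ R := by
    by_contra hcon
    have := hR _ (not_le.1 hcon).le
    omega
  obtain ⟨p, hp⟩ := (cayleyGraph_reachable hS hgen x y).exists_walk_length_eq_dist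
  have h4 := mem_pow_of_walk hS p
  rw [hp] at h4
  exact Set.pow_subset_pow_right (Set.mem_insert 1 S) h3
    (Set.pow_subset_pow_left (Set.subset_insert 1 S) h4)

end Cayley

/-- A finitely generated virtually solvable group that is not virtually
nilpotent admits no coarse embedding of any of its Cayley graphs into any `δ`-hyperbolic
connected graph of uniformly bounded degree (in particular, into any hyperbolic group). -/
theorem virtuallySolvable_not_nilpotent_no_coarse_embedding
    {G : Type*} [Group G] [Group.FG G]
    (hsolv : VirtuallySolvable G) (hnotnilp : ¬ VirtuallyNilpotent G) :
    ∀ S : Set G, S.Finite → S⁻¹ = S → Subgroup.closure S = ⊤ →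
      ∀ (W : Type*) (Y : SimpleGraph W), Y.Connected → BddDegree Y →
        ∀ δ : ℝ, 1 ≤ δ → GraphHyperbolic Y δ →
          ∀ (f : G → W) (K : ℝ) (ρ : ℕ → ℕ),
            ¬ IsCoarseEmbedding (cayleyGraph G S) Y f K ρ := by
  classical
  intro S hfin hinv hgen W Y hY ⟨b, hb⟩ δ _ hδ f K ρ hf
  refine hnotnilp (virtuallyNilpotent_of_polyGrowth ?_ hsolv)
  have hS : ∀ s ∈ S, s⁻¹ ∈ S := fun s hs => by
    rw [← hinv]; exact Set.inv_mem_inv.2 hs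
  obtain ⟨D, hD⟩ := hδ.slim hY
  obtain ⟨M, hM⟩ := exists_fibre_bound hfin hS hgen hf
  obtain ⟨T, hT⟩ : ∃ T : Finset G, (T : Set G) = insert 1 S :=
    ⟨(hfin.insert 1).toFinset, Set.Finite.coe_toFinset _⟩
  have hmemT : ∀ s, s ∈ T ↔ s = 1 ∨ s ∈ S := fun s => by
    rw [← Finset.mem_coe, hT, Set.mem_insert_iff]
  have h1T : 1 ∈ T := (hmemT 1).2 (Or.inl rfl)
  have hTinv : ∀ s ∈ T, s⁻¹ ∈ T := fun s hs => by
    rcases (hmemT s).1 hs with rfl | h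
    · rwa [inv_one]
    · exact (hmemT _).2 (Or.inr (hS s h))
  have hK : ∀ x, ∀ s ∈ T, Y.dist (f x) (f (x * s)) ≤ ⌈K⌉₊ := by
    intro x s hs
    rcases (hmemT s).1 hs with rfl | h
    · simp
    have h1 := (hf.2.2 x (x * s)).2
    have h2 : ((cayleyGraph G S).dist x (x * s) : ℝ) ≤ 1 := by
      exact_mod_cast cayleyGraph_dist_le_one hS x h
    have h3 : K * ((cayleyGraph G S).dist x (x * s) : ℝ) ≤ K :=
      mul_le_of_le_one_right (by linarith [hf.1]) h2
    exact_mod_cast (h1.trans h3).trans (Nat.le_ceil K)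
  obtain ⟨N, η, C, hN, hη, hC, hcut⟩ := exists_cut hY hb hD f T ⌈K⌉₊ M hK hM
  have hcuts : HasCuts T (N + 1) (7 * M) η C := by
    intro Γ hΓ hm
    obtain ⟨A, hA, h1, h2, h3⟩ := hcut Γ hΓ hm
    have e1 : {x | x ∈ Γ ∧ x ∉ A}.ncard = (Γ \ A).card := by
      rw [← Set.ncard_coe_finset]
      congr 1
      ext x
      simp
    rw [e1] at h2
    refine ⟨A, hA, h1.trans (Nat.mul_le_mul_right _ (by omega)),
      h2.trans (Nat.mul_le_mul_right _ (by omega)), le_trans (le_of_eq ?_) h3⟩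
    rw [edges, ← Set.ncard_coe_finset]
    congr 2
    ext q
    simp [and_assoc]
  obtain ⟨c, d, hcd⟩ := exists_card_pow_le (Folner.of_virtuallySolvable hsolv) h1T hTinv
    (by omega : 2 ≤ N + 1) hη hC hcuts
  refine polyGrowth_of_card_pow_le (T : Set G) T.finite_toSet h1T hTinv ?_ (c := c) (d := d)
    fun r => ?_
  · rw [eq_top_iff, ← hgen, hT]
    exact Subgroup.closure_mono (Set.subset_insert _ _)
  · rw [← Finset.coe_pow, Set.ncard_coe_finset]
    exact hcd r
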